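/- arXiv:2401.06784 — 7 statements merged into one kernel-verified Lean document; each statement's English description precedes it below -/
import Mathlib

section
/- Let (p,q) be admissible. Suppose that either (i) both the curve EI1: y² = x(x−(p²−q²)⁴)(x+8p²q²(p⁴+q⁴)) and the curve EI2: y² = x(x−16p⁴q⁴)(x+(p²+q²)⁴−16p⁴q⁴) have only finitely many rational points, or (ii) both the curve EI3: y² = x³ − 2(p⁴+q⁴)x² + (p⁴−q⁴)²x and the curve EI4: y² = x³ − ((p²+q²)²+4p²q²)x² + 4p²q²(p²+q²)²x have only finitely many rational points. Then there is no perfect cuboid (a,b,c) for which there exists an integer f with f² = b²+c² and either a·2pq = f·(p²−q²) or f·2pq = a·(p²−q²); i.e. no perfect cuboid has an internal rectangle with aspect ratio (p²−q²):2pq. -/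
/-!
A perfect cuboid whose internal rectangle has the prescribed aspect ratio gives a rational point
on one curve of each pair, and the work consists in showing that this point has infinite order.

Write `A, B, C` for the edges of a primitive cuboid, `D² = A² + C²`, `E² = A² + B²`,
`F² = B² + C²` for the face diagonals and `G² = A² + F²` for the main diagonal, `A` being the edge
and `F` the face diagonal of the internal rectangle. The right triangle `(A, F, G)` is similar to
`(p² - q², 2pq, p² + q²)` or to `(2pq, p² - q², p² + q²)`. Hence, after rescaling `x` and `y`, EI1
and EI2 respectively become `y² = x (x - A⁴) (x + G⁴ - A⁴)`, while EI4 and EI3 respectively become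
`y² = x (x - F²) (x - G²)`.

A curve `y² = x³ + a x² + b x` with `p`-integral coefficients and a rational point with
`|x|_p > 1` has infinitely many rational points (`infinite_of_norm_gt_one`). This is the part of
the Nagell–Lutz theorem saying that the kernel of reduction has no torsion; it is proved by hand in
the coordinates `z = x / y`, `w = 1 / y` near the origin of the formal group, where multiplication
by `p` raises the `p`-adic valuation of `z` by exactly one. So it is enough to find a chord or a
tangent through `p`-integral points whose slope is not `p`-integral (`infinite_of_slope`).

* On `y² = x (x - F²) (x - G²)` take `p = 2` and the tangent at `(B², BCD)`, where `B` is chosen,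
  of `B` and `C`, to be the one with the larger power of `2`
  (`PrimitiveCuboid.infinite_quadratic`).
* On `y² = x (x - A⁴) (x + G⁴ - A⁴)` take the chord through the point with `x = (AFD / B)²` and one
  of the points of order four with `x = A² (A² + G²)`. Up to `p`-adic units, the denominator of its
  slope is `N`, where `C'² - B'² = d² N` for `B' = B / gcd(B, C)`, `C' = C / gcd(B, C)` and
  `d = gcd(D, E)`. The integer `N` is odd, and `N = ±1` is excluded by Fermat's theorem that
  `x⁴ - y⁴ = z²` has no nontrivial solution, so any prime factor `p` of `N` serves
  (`PrimitiveCuboid.infinite_quartic`).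
-/

/-- The elliptic curve EI1: `y² = x(x−(p²−q²)⁴)(x+8p²q²(p⁴+q⁴))`, as a set of rational
points. -/
def EI1 (p q : ℤ) : Set (ℚ × ℚ) :=
  {P | P.2 ^ 2 = P.1 * (P.1 - ((p : ℚ) ^ 2 - (q : ℚ) ^ 2) ^ 4) *
    (P.1 + 8 * (p : ℚ) ^ 2 * (q : ℚ) ^ 2 * ((p : ℚ) ^ 4 + (q : ℚ) ^ 4))}

/-- The elliptic curve EI2: `y² = x(x−16p⁴q⁴)(x+(p²+q²)⁴−16p⁴q⁴)`. -/
def EI2 (p q : ℤ) : Set (ℚ × ℚ) :=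
  {P | P.2 ^ 2 = P.1 * (P.1 - 16 * (p : ℚ) ^ 4 * (q : ℚ) ^ 4) *
    (P.1 + ((p : ℚ) ^ 2 + (q : ℚ) ^ 2) ^ 4 - 16 * (p : ℚ) ^ 4 * (q : ℚ) ^ 4)}

/-- The elliptic curve EI3: `y² = x³ − 2(p⁴+q⁴)x² + (p⁴−q⁴)²x`. -/
def EI3 (p q : ℤ) : Set (ℚ × ℚ) :=
  {P | P.2 ^ 2 = P.1 ^ 3 - 2 * ((p : ℚ) ^ 4 + (q : ℚ) ^ 4) * P.1 ^ 2 +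
    ((p : ℚ) ^ 4 - (q : ℚ) ^ 4) ^ 2 * P.1}

/-- The elliptic curve EI4: `y² = x³ − ((p²+q²)²+4p²q²)x² + 4p²q²(p²+q²)²x`. -/
def EI4 (p q : ℤ) : Set (ℚ × ℚ) :=
  {P | P.2 ^ 2 = P.1 ^ 3 - (((p : ℚ) ^ 2 + (q : ℚ) ^ 2) ^ 2 + 4 * (p : ℚ) ^ 2 * (q : ℚ) ^ 2) * P.1 ^ 2 +
    4 * (p : ℚ) ^ 2 * (q : ℚ) ^ 2 * ((p : ℚ) ^ 2 + (q : ℚ) ^ 2) ^ 2 * P.1}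

/-! ### The curves `y² = x³ + a x² + b x` -/

/-- The affine rational points of `y² = x³ + a x² + b x`. Nonsingularity is not required. -/
def curvePts (a b : ℚ) : Set (ℚ × ℚ) := {P | P.2 ^ 2 = P.1 ^ 3 + a * P.1 ^ 2 + b * P.1}

/-- The third intersection point of a line of slope `l` with the curve. The hypotheses `hl` and `hs`
cover chords and tangents at once: `hs` says that `l` is the slope of the tangent if the two points
coincide, and for a chord it follows from `hl` and the two curve equations. -/
lemma third_point {a b x₁ y₁ x₂ y₂ l : ℚ} (h₁ : y₁ ^ 2 = x₁ ^ 3 + a * x₁ ^ 2 + b * x₁)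
    (hl : l * (x₁ - x₂) = y₁ - y₂)
    (hs : l * (y₁ + y₂) = x₁ ^ 2 + x₁ * x₂ + x₂ ^ 2 + a * (x₁ + x₂) + b) :
    (l ^ 2 - a - x₁ - x₂, l * (l ^ 2 - a - x₁ - x₂ - x₁) + y₁) ∈ curvePts a b := by
  simp only [curvePts, Set.mem_ofPred_eq]
  linear_combination h₁ + (l ^ 2 - a - x₁ - x₂ - x₁) * hs - l * (l ^ 2 - a - x₁ - x₂ - x₁) * hl

lemma curvePts_finite_scale {a b k : ℚ} (hk : k ≠ 0) (h : (curvePts a b).Finite) :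
    (curvePts (k ^ 2 * a) (k ^ 4 * b)).Finite := by
  refine (h.image (fun P => (k ^ 2 * P.1, k ^ 3 * P.2))).subset ?_
  rintro ⟨x, y⟩ hP
  refine ⟨(x / k ^ 2, y / k ^ 3), ?_, ?_⟩
  · simp only [curvePts, Set.mem_ofPred_eq] at hP ⊢
    field_simp
    linear_combination hP
  · ext <;> simp <;> field_simp

/-! ### Fermat's equation `x⁴ - y⁴ = z²` -/

/-- Fermat's descent for `x⁴ - y⁴ = z²` with `z` odd: the triple `(z, y², x²)` is Pythagorean with
generators `u`, `2v`, and `u`, `v` are squares `m²`, `k²` up to sign. The triple `(m², 2k², |x|)` is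
Pythagorean too; its generators are squares `i²`, `j²` up to sign, and `i⁴ - j⁴ = m²` with
`|i| < |x|`. -/
lemma fermat_quartic_aux (n : ℕ) : ∀ x y z : ℤ, x.natAbs = n → y ≠ 0 → Int.gcd x y = 1 →
    z % 2 = 1 → x ^ 4 - y ^ 4 = z ^ 2 → False := by
  induction n using Nat.strong_induction_on with
  | _ n ih =>
  intro x y z hxn hy hg hz h
  have hx0 : x ≠ 0 := by
    rintro rfl
    have : 0 < y ^ 4 := by positivity
    nlinarith [sq_nonneg z]
  have hgcop : IsCoprime x y := Int.isCoprime_iff_gcd_eq_one.mpr hg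
  have ht : PythagoreanTriple z (y ^ 2) (x ^ 2) := by
    unfold PythagoreanTriple; linear_combination -h
  have hzy : Int.gcd z (y ^ 2) = 1 := by
    rw [← Int.isCoprime_iff_gcd_eq_one]
    have h1 : IsCoprime (z ^ 2) (y ^ 2) := by
      have h2 : IsCoprime (x ^ 4) (y ^ 2) := hgcop.pow
      have h3 : z ^ 2 = x ^ 4 + y ^ 2 * (- y ^ 2) := by linear_combination -h
      rw [h3]
      exact IsCoprime.add_mul_left_left h2 _
    exact (IsCoprime.pow_left_iff two_pos).mp h1
  obtain ⟨r, s, h1, h2, h3, h4, h5, -⟩ := ht.coprime_classification' hzy hz (by positivity)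
  -- of the two generators, `u` is the odd one and `2 * v` the even one
  obtain ⟨u, v, huv2, huv3, huv4, hu⟩ : ∃ u v : ℤ, y ^ 2 = 2 * u * (2 * v) ∧
      x ^ 2 = u ^ 2 + (2 * v) ^ 2 ∧ IsCoprime u (2 * v) ∧ u % 2 = 1 := by
    rcases h5 with ⟨h5, h6⟩ | ⟨h5, h6⟩
    · refine ⟨s, r / 2, ?_, ?_, ?_, h6⟩ <;> rw [Int.mul_ediv_cancel' (by omega)]
      · linear_combination h2
      · linear_combination h3
      · exact (Int.isCoprime_iff_gcd_eq_one.mpr h4).symm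
    · refine ⟨r, s / 2, ?_, ?_, ?_, h5⟩ <;> rw [Int.mul_ediv_cancel' (by omega)]
      · linear_combination h2
      · linear_combination h3
      · exact (Int.isCoprime_iff_gcd_eq_one.mpr h4)
  obtain ⟨y', rfl⟩ : (2 : ℤ) ∣ y := by
    have : (2 : ℤ) ∣ y ^ 2 := ⟨2 * u * v, by linear_combination huv2⟩
    exact Int.prime_two.dvd_of_dvd_pow this
  have huv : u * v = y' ^ 2 := by linarith
  have hcuv : IsCoprime u v := huv4.of_mul_right_right
  obtain ⟨m, hm⟩ := Int.sq_of_isCoprime hcuv huv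
  obtain ⟨k, hk⟩ := Int.sq_of_isCoprime hcuv.symm (by rw [mul_comm]; exact huv)
  have hm4 : u ^ 2 = m ^ 4 := by rcases hm with rfl | rfl <;> ring
  have hk4 : v ^ 2 = k ^ 4 := by rcases hk with rfl | rfl <;> ring
  have hmodd : m % 2 = 1 := by
    rcases Int.emod_two_eq_zero_or_one m with h0 | h0
    · obtain ⟨m', rfl⟩ := Int.dvd_of_emod_eq_zero h0
      rcases hm with rfl | rfl <;> ring_nf at hu <;> omega
    · exact h0
  have hk0 : k ≠ 0 := by
    rintro rfl
    have : v = 0 := by simpa using hk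
    subst this
    have : y' = 0 := by simpa using huv.symm
    exact hy (by simp [this])
  have hmk : IsCoprime (m ^ 2) (2 * k ^ 2) := by
    rcases hm with rfl | rfl <;> rcases hk with rfl | rfl <;>
      simpa [IsCoprime.neg_left_iff, IsCoprime.neg_right_iff] using huv4
  have ht2 : PythagoreanTriple (m ^ 2) (2 * k ^ 2) |x| := by
    unfold PythagoreanTriple
    rw [abs_mul_abs_self]
    linear_combination -huv3 - hm4 - 4 * hk4
  obtain ⟨t, w, e1, e2, e3, e4, -, -⟩ := ht2.coprime_classification'
    (Int.isCoprime_iff_gcd_eq_one.mp hmk)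
    (by rw [pow_two, Int.mul_emod, hmodd]; rfl) (abs_pos.mpr hx0)
  have htw : t * w = k ^ 2 := by linarith
  have hctw : IsCoprime t w := Int.isCoprime_iff_gcd_eq_one.mpr e4
  obtain ⟨i, hi⟩ := Int.sq_of_isCoprime hctw htw
  obtain ⟨j, hj⟩ := Int.sq_of_isCoprime hctw.symm (by rw [mul_comm]; exact htw)
  have hi4 : t ^ 2 = i ^ 4 := by rcases hi with rfl | rfl <;> ring
  have hj4 : w ^ 2 = j ^ 4 := by rcases hj with rfl | rfl <;> ring
  have hj0 : j ≠ 0 := by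
    rintro rfl
    have : w = 0 := by simpa using hj
    subst this
    exact hk0 (by simpa using htw.symm)
  have hij : IsCoprime (i ^ 2) (j ^ 2) := by
    rcases hi with rfl | rfl <;> rcases hj with rfl | rfl <;>
      simpa [IsCoprime.neg_left_iff, IsCoprime.neg_right_iff] using hctw
  have hij' : IsCoprime i j := (IsCoprime.pow_iff two_pos two_pos).mp hij
  refine ih i.natAbs ?_ i j m rfl hj0 (Int.isCoprime_iff_gcd_eq_one.mp hij') hmodd
    (by linear_combination -e1 - hi4 + hj4)
  rw [← hxn]
  have hlt : |i| < |x| := by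
    have h6 : 0 < j ^ 4 := by positivity
    have h7 : |i| ≤ i ^ 4 := by
      have : i ^ 4 = |i| ^ 4 := by rw [← abs_pow]; exact (abs_of_nonneg (by positivity)).symm
      rw [this]
      rcases (abs_nonneg i).eq_or_lt with h8 | h8
      · simp [← h8]
      · exact le_self_pow₀ h8 (by norm_num)
    linarith
  zify
  exact hlt

lemma no_sq_add_sq_sub {x y z w : ℤ} (hy : y ≠ 0) (hg : IsCoprime x y) (hz : z % 2 = 1)
    (hw : w % 2 = 1) (h₁ : x ^ 2 - y ^ 2 = z ^ 2) (h₂ : x ^ 2 + y ^ 2 = w ^ 2) : False :=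
  fermat_quartic_aux _ x y (z * w) rfl hy (Int.isCoprime_iff_gcd_eq_one.mp hg)
    (by rw [Int.mul_emod, hz, hw]; rfl)
    (by linear_combination (x ^ 2 + y ^ 2) * h₁ + z ^ 2 * h₂)

/-! ### Points in the kernel of reduction have infinite order -/

/-- The subring of `p`-integral rational numbers. -/
def pInt (p : ℕ) [Fact p.Prime] : Subring ℚ where
  carrier := {x | padicNorm p x ≤ 1}
  mul_mem' {a b} ha hb := by
    simp only [Set.mem_ofPred_eq, padicNorm.mul] at *
    exact mul_le_one₀ ha (padicNorm.nonneg b) hb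
  one_mem' := by simp
  add_mem' {a b} ha hb := padicNorm.nonarchimedean.trans (max_le ha hb)
  zero_mem' := by simp
  neg_mem' {a} ha := by simpa using ha

section
variable {p : ℕ} [hp : Fact p.Prime]

lemma mem_pInt {x : ℚ} : x ∈ pInt p ↔ padicNorm p x ≤ 1 := Iff.rfl

lemma intCast_mem_pInt (n : ℤ) : (n : ℚ) ∈ pInt p := padicNorm.of_int n

lemma norm_p_lt : padicNorm p (p : ℚ) < 1 := padicNorm.padicNorm_p_lt_one hp.out.one_lt

lemma norm_p_pow (n : ℕ) : padicNorm p ((p : ℚ) ^ n) = ((p : ℚ) ^ n)⁻¹ := by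
  induction n with
  | zero => simp
  | succ n ih => rw [pow_succ, padicNorm.mul, ih, padicNorm.padicNorm_p hp.out.one_lt, mul_inv]

lemma norm_p_mul_lt {r : ℚ} (hr : r ∈ pInt p) : padicNorm p (p * r) < 1 := by
  rw [padicNorm.mul]
  exact mul_lt_one_of_nonneg_of_lt_one_left (padicNorm.nonneg _) norm_p_lt hr

lemma norm_add_p_mul {x r : ℚ} (hx : padicNorm p x = 1) (hr : r ∈ pInt p) :
    padicNorm p (x + p * r) = 1 := by
  have h := norm_p_mul_lt hr
  rw [padicNorm.add_eq_max_of_ne (by rw [hx]; exact h.ne'), hx, max_eq_left h.le]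

lemma pInt_div_mem {x r u : ℚ} (hx : x ∈ pInt p) (hr : r ∈ pInt p) (hu : u = 1 + p * r) :
    x / u ∈ pInt p ∧ u ≠ 0 := by
  have h1 : padicNorm p u = 1 := by rw [hu]; exact norm_add_p_mul (by simp) hr
  constructor
  · rw [mem_pInt, padicNorm.div, h1, div_one]; exact hx
  · rintro rfl; simp at h1

/-- Addition on the curve `w = z³ + a' z² w + b' z w²`, obtained from the Weierstrass equation by
`z = x / y`, `w = 1 / y`, when `p²` divides `a'` and `b'`. The line through the two points (the
tangent, if they coincide) has a `p`-integral slope `α = M / D`, and the `z`-coordinate of the sum is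
`z₁ + z₂` modulo `p²`. The sum is minus the third intersection point, and negation is
`(z, w) ↦ (-z, -w)`. -/
lemma formal_add {a b z₁ w₁ z₂ w₂ : ℚ} (ha : a ∈ pInt p) (hb : b ∈ pInt p)
    (hz₁ : z₁ ∈ pInt p) (hw₁ : w₁ ∈ pInt p) (hz₂ : z₂ ∈ pInt p) (hw₂ : w₂ ∈ pInt p)
    (h₁ : w₁ = z₁ ^ 3 + (p ^ 2 * a) * z₁ ^ 2 * w₁ + (p ^ 2 * b) * z₁ * w₁ ^ 2)
    (h₂ : w₂ = z₂ ^ 3 + (p ^ 2 * a) * z₂ ^ 2 * w₂ + (p ^ 2 * b) * z₂ * w₂ ^ 2) :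
    ∃ z w r : ℚ, z ∈ pInt p ∧ w ∈ pInt p ∧ r ∈ pInt p ∧
      w = z ^ 3 + (p ^ 2 * a) * z ^ 2 * w + (p ^ 2 * b) * z * w ^ 2 ∧
      z = z₁ + z₂ + p ^ 2 * r := by
  have hpm : (p : ℚ) ∈ pInt p := norm_p_lt.le
  set D : ℚ := 1 - p ^ 2 * (a * z₂ ^ 2 + b * z₂ * (w₁ + w₂)) with hD
  set M : ℚ := z₁ ^ 2 + z₁ * z₂ + z₂ ^ 2 + (p ^ 2 * a) * (z₁ + z₂) * w₁ + (p ^ 2 * b) * w₁ ^ 2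
    with hM
  have hMm : M ∈ pInt p := by
    rw [hM]
    repeat' first | assumption | apply add_mem | apply mul_mem | apply pow_mem
  obtain ⟨hq, hD0⟩ := pInt_div_mem (u := D) (r := -(p * (a * z₂ ^ 2 + b * z₂ * (w₁ + w₂)))) hMm
    (by repeat' first | assumption | apply neg_mem | apply add_mem | apply mul_mem | apply pow_mem)
    (by rw [hD]; ring)
  obtain ⟨α, hα, hαD⟩ : ∃ α ∈ pInt p, α * D = M := ⟨M / D, hq, by field_simp⟩
  obtain ⟨β, hβm, hβ⟩ : ∃ β ∈ pInt p, β = w₁ - α * z₁ :=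
    ⟨_, sub_mem hw₁ (mul_mem hα hz₁), rfl⟩
  clear_value D M
  obtain ⟨r, U, hr, hU, hrU⟩ : ∃ r U : ℚ, r ∈ pInt p ∧ U = 1 + (p : ℚ) ^ 2 * (a * α + b * α ^ 2) ∧
      r * U = a * β + 2 * b * α * β := by
    have hm : a * β + (b * α * β + b * α * β) ∈ pInt p := by
      repeat' first | assumption | apply add_mem | apply mul_mem
    obtain ⟨h, h0⟩ := pInt_div_mem (u := 1 + (p : ℚ) ^ 2 * (a * α + b * α ^ 2))
      (r := p * (a * α + b * α ^ 2)) hm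
      (by repeat' first | assumption | apply add_mem | apply mul_mem | apply pow_mem)
      (by ring)
    exact ⟨_, _, h, rfl, by rw [div_mul_cancel₀ _ h0]; ring⟩
  have hline : w₂ = α * z₂ + β := by
    have : D * (w₂ - (α * z₂ + β)) = 0 := by
      rw [hβ]
      linear_combination (z₁ - z₂) * hαD + h₂ - h₁ - (w₁ - w₂) * hD - (z₂ - z₁) * hM
    have := (mul_eq_zero.mp this).resolve_left hD0
    linarith
  have hzm : z₁ + z₂ + p ^ 2 * r ∈ pInt p := add_mem (add_mem hz₁ hz₂) (mul_mem (pow_mem hpm 2) hr)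
  refine ⟨z₁ + z₂ + p ^ 2 * r, α * (z₁ + z₂ + p ^ 2 * r) - β, r, hzm,
    sub_mem (mul_mem hα hzm) hβm, hr, ?_, rfl⟩
  have hw₁' : w₁ = α * z₁ + β := by rw [hβ]; ring
  have hdd : U * (z₁ ^ 2 + z₁ * z₂ + z₂ ^ 2) + (p ^ 2 * a * β + 2 * (p ^ 2 * b) * α * β) * (z₁ + z₂)
      + (p ^ 2 * b * β ^ 2 - α) = 0 := by
    rw [hD, hM, hline, hw₁'] at hαD
    rw [hU]
    linear_combination -hαD
  rw [hw₁'] at h₁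
  generalize hz : z₁ + z₂ + p ^ 2 * r = z
  have hzU : U * (z - z₁ - z₂) = p ^ 2 * (a * β + 2 * b * α * β) := by
    rw [← hz]; linear_combination p ^ 2 * hrU
  rw [hU] at hdd hzU
  linear_combination -h₁ - (z + z₁) * hdd - (z + z₁) * (z + z₂) * hzU

lemma formal_nsmul {a b z₁ w₁ : ℚ} (ha : a ∈ pInt p) (hb : b ∈ pInt p)
    (hz₁ : z₁ ∈ pInt p) (hw₁ : w₁ ∈ pInt p)
    (h₁ : w₁ = z₁ ^ 3 + (p ^ 2 * a) * z₁ ^ 2 * w₁ + (p ^ 2 * b) * z₁ * w₁ ^ 2) (n : ℕ) :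
    ∃ z w r : ℚ, z ∈ pInt p ∧ w ∈ pInt p ∧ r ∈ pInt p ∧
      w = z ^ 3 + (p ^ 2 * a) * z ^ 2 * w + (p ^ 2 * b) * z * w ^ 2 ∧
      z = n * z₁ + p ^ 2 * r := by
  induction n with
  | zero => exact ⟨0, 0, 0, zero_mem _, zero_mem _, zero_mem _, by ring, by simp⟩
  | succ n ih =>
    obtain ⟨z, w, r, hz, hw, hr, h, e⟩ := ih
    obtain ⟨z', w', r', hz', hw', hr', h', e'⟩ := formal_add ha hb hz hw hz₁ hw₁ h h₁
    exact ⟨z', w', r + r', hz', hw', add_mem hr hr', h', by rw [e', e]; push_cast; ring⟩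

/-- There is a point on `y² = x³ + a x² + b x` for which `z = x / y` has `p`-adic valuation exactly
`k`. The point is recorded by the rescaled coordinates `z = x / (pᵏ y)` and `w = 1 / (p³ᵏ y)`, so
that `z` is a `p`-adic unit and `w` is `p`-integral. -/
def HasPointAtLevel (p : ℕ) [Fact p.Prime] (a b : ℚ) (k : ℕ) : Prop :=
  ∃ z w : ℚ, padicNorm p z = 1 ∧ w ∈ pInt p ∧
    w = z ^ 3 + (p ^ (2 * k) * a) * z ^ 2 * w + (p ^ (4 * k) * b) * z * w ^ 2

/-- Multiplication by `p` moves a point from level `k + 1` to level `k + 2`. -/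
lemma HasPointAtLevel.succ {a b : ℚ} (ha : a ∈ pInt p) (hb : b ∈ pInt p) {k : ℕ}
    (h : HasPointAtLevel p a b (k + 1)) : HasPointAtLevel p a b (k + 2) := by
  obtain ⟨z₁, w₁, hz₁, hw₁, h₁⟩ := h
  have hpm : (p : ℚ) ∈ pInt p := norm_p_lt.le
  have hp0 : (p : ℚ) ≠ 0 := by exact_mod_cast hp.out.ne_zero
  have ha' : (p : ℚ) ^ (2 * k) * a ∈ pInt p := mul_mem (pow_mem hpm _) ha
  have hb' : (p : ℚ) ^ (4 * k + 2) * b ∈ pInt p := mul_mem (pow_mem hpm _) hb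
  obtain ⟨z, w, r, hz, hw, hr, h, e⟩ := formal_nsmul (p := p) ha' hb' (z₁ := z₁) hz₁.le hw₁
    (by linear_combination h₁) p
  have hz' : z = p * (z₁ + p * r) := by rw [e]; ring
  have hn : padicNorm p (z₁ + p * r) = 1 := norm_add_p_mul hz₁ hr
  generalize z₁ + p * r = t at hz' hn
  have htm : t ∈ pInt p := hn.le
  -- `w = z³ / (1 - …)`, so `w` is divisible by `p³`
  obtain ⟨hm, h0⟩ := pInt_div_mem (x := t ^ 3)
    (u := 1 - (p ^ 2 * (p ^ (2 * k) * a)) * z ^ 2 - (p ^ 2 * (p ^ (4 * k + 2) * b)) * z * w)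
    (r := -(p * (p ^ (2 * k) * a) * z ^ 2 + p * (p ^ (4 * k + 2) * b) * z * w))
    (pow_mem htm 3)
    (by
      refine neg_mem (add_mem ?_ ?_)
      · exact mul_mem (mul_mem hpm ha') (pow_mem hz 2)
      · exact mul_mem (mul_mem (mul_mem hpm hb') hz) hw)
    (by ring)
  refine ⟨t, w / p ^ 3, hn, ?_, ?_⟩
  · convert hm using 1
    rw [div_eq_div_iff (pow_ne_zero 3 hp0) h0]
    rw [hz'] at h ⊢
    linear_combination h
  · rw [hz'] at h
    field_simp
    linear_combination (p : ℚ) ^ 3 * h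

lemma HasPointAtLevel.exists_point {a b : ℚ} (ha : a ∈ pInt p) (hb : b ∈ pInt p) {k : ℕ}
    (h : HasPointAtLevel p a b (k + 1)) :
    ∃ P ∈ curvePts a b, padicNorm p P.1 = (p : ℚ) ^ (2 * (k + 1)) := by
  obtain ⟨z, w, hz, hw, h⟩ := h
  have hpm : (p : ℚ) ∈ pInt p := norm_p_lt.le
  have hp0 : (p : ℚ) ≠ 0 := by exact_mod_cast hp.out.ne_zero
  have hzm : z ∈ pInt p := hz.le
  have hw1 : padicNorm p w = 1 := by
    have : w = z ^ 3 + p * (p ^ (2 * k + 1) * a * z ^ 2 * w + p ^ (4 * k + 3) * b * z * w ^ 2) := by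
      linear_combination h
    rw [this]
    refine norm_add_p_mul (by rw [pow_succ, pow_succ, pow_one]; simp [padicNorm.mul, hz]) ?_
    repeat' first | assumption | apply add_mem | apply mul_mem | apply pow_mem
  have hw0 : w ≠ 0 := by rintro rfl; simp at hw1
  refine ⟨(z / w / p ^ (2 * (k + 1)), 1 / (p ^ (3 * (k + 1)) * w)), ?_, ?_⟩
  · simp only [curvePts, Set.mem_ofPred_eq]
    have e1 : (p : ℚ) ^ (2 * (k + 1)) = (p ^ (k + 1)) ^ 2 := by rw [← pow_mul]; ring_nf
    have e2 : (p : ℚ) ^ (3 * (k + 1)) = (p ^ (k + 1)) ^ 3 := by rw [← pow_mul]; ring_nf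
    have e3 : (p : ℚ) ^ (4 * (k + 1)) = (p ^ (k + 1)) ^ 4 := by rw [← pow_mul]; ring_nf
    rw [e1, e3] at h
    rw [e1, e2]
    have hq : (p : ℚ) ^ (k + 1) ≠ 0 := pow_ne_zero _ hp0
    generalize (p : ℚ) ^ (k + 1) = q at *
    field_simp
    linear_combination h
  · simp only [padicNorm.div, hz, hw1, norm_p_pow]
    simp

/-- A curve with `p`-integral coefficients and a rational point whose `x`-coordinate is not
`p`-integral has infinitely many rational points: the multiples of that point by powers of `p` have
`x`-coordinates of strictly increasing `p`-adic norm. -/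
theorem infinite_of_norm_gt_one {a b : ℚ} (ha : a ∈ pInt p) (hb : b ∈ pInt p) {x y : ℚ}
    (hP : (x, y) ∈ curvePts a b) (hx : 1 < padicNorm p x) : (curvePts a b).Infinite := by
  intro hfin
  have hp1 : (1 : ℚ) < p := by exact_mod_cast hp.out.one_lt
  have hp0 : (p : ℚ) ≠ 0 := by positivity
  simp only [curvePts, Set.mem_ofPred_eq] at hP
  have hx0 : x ≠ 0 := by rintro rfl; simp at hx; linarith
  have hinv : padicNorm p (1 / x) < 1 := by
    rw [padicNorm.div, padicNorm.one]; exact (div_lt_one (by linarith)).mpr hx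
  -- `|y|² = |x|³`
  have hfac : y ^ 2 = x ^ 3 * (1 + (a / x + b / x ^ 2)) := by
    rw [hP]; field_simp; ring
  have hsmall : padicNorm p (a / x + b / x ^ 2) < 1 := by
    refine padicNorm.nonarchimedean.trans_lt (max_lt ?_ ?_)
    · rw [div_eq_mul_one_div, padicNorm.mul]
      exact mul_lt_one_of_nonneg_of_lt_one_right ha (padicNorm.nonneg _) hinv
    · rw [div_eq_mul_one_div, padicNorm.mul]
      refine mul_lt_one_of_nonneg_of_lt_one_right hb (padicNorm.nonneg _) ?_
      rw [show 1 / x ^ 2 = (1 / x) * (1 / x) by field_simp, padicNorm.mul]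
      exact mul_lt_one_of_nonneg_of_lt_one_right hinv.le (padicNorm.nonneg _) hinv
  have hunit : padicNorm p (1 + (a / x + b / x ^ 2)) = 1 := by
    rw [padicNorm.add_eq_max_of_ne (by rw [padicNorm.one]; exact hsmall.ne'), padicNorm.one,
      max_eq_left hsmall.le]
  have hny : padicNorm p y * padicNorm p y = padicNorm p x * padicNorm p x * padicNorm p x := by
    have := congrArg (padicNorm p) hfac
    rw [padicNorm.mul, hunit, pow_two, pow_succ, pow_two] at this
    simpa [padicNorm.mul] using this
  have hy0 : y ≠ 0 := by
    rintro rfl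
    have h1 : 0 < padicNorm p x := by linarith
    have : 0 < padicNorm p x * padicNorm p x * padicNorm p x := by positivity
    simp [← hny] at this
  have hnypos : 0 < padicNorm p y := lt_of_le_of_ne (padicNorm.nonneg _) (by
    intro h; exact hy0 (padicNorm.zero_of_padicNorm_eq_zero h.symm))
  have hnz : padicNorm p (x / y) * padicNorm p (x / y) * padicNorm p x = 1 := by
    rw [padicNorm.div]
    field_simp
    linear_combination -hny
  obtain ⟨m, hm⟩ := padicNorm.values_discrete (p := p) (div_ne_zero hx0 hy0)
  have hm0 : 0 < m := by
    by_contra hcon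
    have h1 : (1 : ℚ) ≤ padicNorm p (x / y) := by
      rw [hm]; exact one_le_zpow₀ hp1.le (by omega)
    have : 1 < padicNorm p (x / y) * padicNorm p (x / y) * padicNorm p x :=
      one_lt_mul_of_le_of_lt (one_le_mul_of_one_le_of_one_le h1 h1) hx
    linarith
  obtain ⟨k, rfl⟩ : ∃ k : ℕ, m = (k + 1 : ℕ) := ⟨(m - 1).toNat, by omega⟩
  rw [zpow_neg, zpow_natCast] at hm
  have hbase : HasPointAtLevel p a b (k + 1) := by
    refine ⟨x / y / p ^ (k + 1), 1 / y / (p ^ (k + 1)) ^ 3, ?_, ?_, ?_⟩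
    · rw [padicNorm.div, hm, norm_p_pow]
      exact div_self (inv_ne_zero (pow_ne_zero _ hp0))
    · have hq := norm_p_pow (p := p) (k + 1)
      rw [mem_pInt, padicNorm.div, padicNorm.div, padicNorm.one, pow_succ, pow_two, padicNorm.mul,
        padicNorm.mul, hq, ← hm]
      have hz0 : 0 < padicNorm p (x / y) := by rw [hm]; positivity
      rw [padicNorm.div] at *
      have : padicNorm p x ≠ 0 := by positivity
      apply le_of_eq
      field_simp
      linear_combination hny
    · have e1 : (p : ℚ) ^ (2 * (k + 1)) = (p ^ (k + 1)) ^ 2 := by rw [← pow_mul]; ring_nf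
      have e3 : (p : ℚ) ^ (4 * (k + 1)) = (p ^ (k + 1)) ^ 4 := by rw [← pow_mul]; ring_nf
      rw [e1, e3]
      have hq : (p : ℚ) ^ (k + 1) ≠ 0 := pow_ne_zero _ hp0
      generalize (p : ℚ) ^ (k + 1) = q at *
      field_simp
      linear_combination hP
  have hall : ∀ n : ℕ, HasPointAtLevel p a b (k + n + 1) := by
    intro n
    induction n with
    | zero => exact hbase
    | succ n ih => exact ih.succ ha hb
  choose P hP hPn using fun n => (hall n).exists_point ha hb
  refine Set.infinite_of_injective_forall_mem (f := P) ?_ hP hfin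
  intro i j hij
  have h := hPn i
  rw [hij, hPn j] at h
  have := pow_right_injective₀ (by positivity) hp1.ne' h
  omega

/-- A line through two `p`-integral points with a slope that is not `p`-integral meets the curve in a
third point whose `x`-coordinate is not `p`-integral. -/
lemma infinite_of_slope {a b x₁ y₁ x₂ y₂ l : ℚ} (ha : a ∈ pInt p) (hb : b ∈ pInt p)
    (hx₁ : x₁ ∈ pInt p) (hx₂ : x₂ ∈ pInt p) (h₁ : y₁ ^ 2 = x₁ ^ 3 + a * x₁ ^ 2 + b * x₁)
    (hl : l * (x₁ - x₂) = y₁ - y₂)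
    (hs : l * (y₁ + y₂) = x₁ ^ 2 + x₁ * x₂ + x₂ ^ 2 + a * (x₁ + x₂) + b)
    (hn : 1 < padicNorm p l) : (curvePts a b).Infinite := by
  refine infinite_of_norm_gt_one ha hb (third_point h₁ hl hs) ?_
  have h1 : padicNorm p (-(a + x₁ + x₂)) ≤ 1 := neg_mem (add_mem (add_mem ha hx₁) hx₂)
  have h2 : 1 < padicNorm p (l ^ 2) := by
    rw [pow_two, padicNorm.mul]; exact one_lt_mul_of_lt_of_le hn hn.le
  rw [show l ^ 2 - a - x₁ - x₂ = l ^ 2 + -(a + x₁ + x₂) by ring,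
    padicNorm.add_eq_max_of_ne (h1.trans_lt h2).ne']
  exact lt_max_of_lt_left h2

lemma one_lt_norm_div {m n : ℤ} (hm : ¬ (p : ℤ) ∣ m) (hn : (p : ℤ) ∣ n) (hn0 : n ≠ 0) :
    1 < padicNorm p ((m : ℚ) / n) := by
  rw [padicNorm.div, (padicNorm.int_eq_one_iff m).mpr hm]
  have h1 := (padicNorm.int_lt_one_iff n).mpr hn
  have h2 : 0 < padicNorm p (n : ℚ) := lt_of_le_of_ne (padicNorm.nonneg _) (by
    intro h; exact hn0 (by exact_mod_cast padicNorm.zero_of_padicNorm_eq_zero h.symm))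
  exact (one_lt_div h2).mpr h1

end

/-! ### Primitive perfect cuboids -/

lemma exists_coprime_factor {x y : ℤ} (hx : 0 < x) (hy : 0 < y) :
    ∃ g x' y' : ℤ, 0 < g ∧ 0 < x' ∧ 0 < y' ∧ IsCoprime x' y' ∧ x = g * x' ∧ y = g * y' := by
  have hg : 0 < Int.gcd x y := Int.gcd_pos_of_ne_zero_left _ hx.ne'
  obtain ⟨x', y', h1, h2, h3⟩ := Int.exists_gcd_one hg
  have hg' : (0 : ℤ) < Int.gcd x y := by exact_mod_cast hg
  refine ⟨Int.gcd x y, x', y', hg', ?_, ?_, Int.isCoprime_iff_gcd_eq_one.mpr h1, ?_, ?_⟩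
  · rw [h2] at hx; exact pos_of_mul_pos_left hx hg'.le
  · rw [h3] at hy; exact pos_of_mul_pos_left hy hg'.le
  · linarith
  · linarith

lemma opposite_parity {x y z : ℤ} (h : IsCoprime x y) (hz : z ^ 2 = x ^ 2 + y ^ 2) :
    (x + y) % 2 = 1 := by
  rcases Int.even_or_odd' x with ⟨i, hx | hx⟩ <;> rcases Int.even_or_odd' y with ⟨j, hy | hy⟩
  · exfalso
    have : IsUnit (2 : ℤ) := h.isUnit_of_dvd' ⟨i, hx⟩ ⟨j, hy⟩
    exact Int.prime_two.not_isUnit this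
  · omega
  · omega
  · exfalso
    rcases Int.even_or_odd' z with ⟨k, hk | hk⟩ <;> rw [hx, hy, hk] at hz <;> ring_nf at hz <;> omega

/-- A perfect cuboid with edges `A, B, C`, face diagonals `D, E, F` (of the faces `AC`, `AB`, `BC`)
and main diagonal `G`, whose edges have no common prime factor. -/
structure PrimitiveCuboid (A B C D E F G : ℤ) : Prop where
  posA : 0 < A
  posB : 0 < B
  posC : 0 < C
  posD : 0 < D
  posE : 0 < E
  posF : 0 < F
  posG : 0 < G
  hD : D ^ 2 = A ^ 2 + C ^ 2
  hE : E ^ 2 = A ^ 2 + B ^ 2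
  hF : F ^ 2 = B ^ 2 + C ^ 2
  hG : G ^ 2 = A ^ 2 + B ^ 2 + C ^ 2
  prim : ∀ r : ℤ, Prime r → r ∣ A → r ∣ B → r ∣ C → False

namespace PrimitiveCuboid

variable {A B C D E F G : ℤ}

lemma swap (h : PrimitiveCuboid A B C D E F G) : PrimitiveCuboid A C B E D F G :=
  ⟨h.posA, h.posC, h.posB, h.posE, h.posD, h.posF, h.posG, h.hE, h.hD, by rw [h.hF]; ring,
    by rw [h.hG]; ring, fun r hr ha hc hb => h.prim r hr ha hb hc⟩

lemma odd_G (h : PrimitiveCuboid A B C D E F G) : G % 2 = 1 := by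
  have hA := h.hG
  have hF := h.hF
  by_contra hG
  obtain ⟨g, rfl⟩ : (2 : ℤ) ∣ G := by omega
  have key : ∀ x y z : ℤ, (2 * z) ^ 2 = x ^ 2 + y ^ 2 → 2 ∣ x ∧ 2 ∣ y := by
    intro x y z hz
    rcases Int.even_or_odd' x with ⟨i, hx | hx⟩ <;> rcases Int.even_or_odd' y with ⟨j, hy | hy⟩ <;>
      rw [hx, hy] at hz <;> ring_nf at hz <;> omega
  obtain ⟨h1, f, rfl⟩ := key A F g (by rw [hA, hF]; ring)
  obtain ⟨h2, h3⟩ := key B C f hF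
  exact h.prim 2 Int.prime_two h1 h2 h3

/-! ### The curve `y² = x (x - F²) (x - G²)` -/

/-- With `B = gB'`, `F = gF'` and `B'` even, the slope of the tangent at `(B², BCD)` is
`(3g²B'⁴ - 2(F² + G²)B'² + F'²G²) / (2B'C'D)`, where the numerator is odd because `F'` and `G` are.
So the double of this point is not `2`-integral. -/
theorem infinite_quadratic (h : PrimitiveCuboid A B C D E F G) :
    (curvePts (-((F : ℚ) ^ 2 + (G : ℚ) ^ 2)) ((F : ℚ) ^ 2 * (G : ℚ) ^ 2)).Infinite := by
  obtain ⟨g, B', C', hg, hB', hC', hcop, hB, hC⟩ := exists_coprime_factor h.posB h.posC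
  have hFdvd : g ∣ F := by
    have : g ^ 2 ∣ F ^ 2 := ⟨B' ^ 2 + C' ^ 2, by rw [h.hF, hB, hC]; ring⟩
    exact (Int.pow_dvd_pow_iff two_ne_zero).mp this
  obtain ⟨F', hF'⟩ := hFdvd
  have hF2 : F' ^ 2 = B' ^ 2 + C' ^ 2 := by
    have : g ^ 2 * (F' ^ 2 - (B' ^ 2 + C' ^ 2)) = 0 := by
      have := h.hF
      rw [hB, hC, hF'] at this
      linear_combination this
    have := (mul_eq_zero.mp this).resolve_left (by positivity)
    linarith
  have hpar := opposite_parity hcop hF2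
  wlog hBe : B' % 2 = 0 generalizing B C D E B' C'
  · exact this h.swap C' B' hC' hB' hcop.symm hC hB (by rw [hF2]; ring) (by omega) (by omega)
  have hF'odd : F' % 2 = 1 := by
    rcases Int.even_or_odd' F' with ⟨i, hi | hi⟩
    · exfalso
      obtain ⟨j, hj⟩ : (2 : ℤ) ∣ B' := by omega
      obtain ⟨k, hk⟩ : ∃ k, C' = 2 * k + 1 := ⟨C' / 2, by omega⟩
      rw [hi, hj, hk] at hF2
      ring_nf at hF2
      omega
    · omega
  have : Fact (Nat.Prime 2) := ⟨Nat.prime_two⟩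
  have hint : ∀ n : ℤ, (n : ℚ) ∈ pInt 2 := intCast_mem_pInt
  have hgQ : (g : ℚ) ≠ 0 := by exact_mod_cast hg.ne'
  have hBQ : (B' : ℚ) ≠ 0 := by exact_mod_cast hB'.ne'
  have hCQ : (C' : ℚ) ≠ 0 := by exact_mod_cast hC'.ne'
  have hDQ : (D : ℚ) ≠ 0 := by exact_mod_cast h.posD.ne'
  have hBq : (B : ℚ) = g * B' := by exact_mod_cast hB
  have hCq : (C : ℚ) = g * C' := by exact_mod_cast hC
  have hFq : (F : ℚ) = g * F' := by exact_mod_cast hF'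
  have hF2q : (F' : ℚ) ^ 2 = B' ^ 2 + C' ^ 2 := by exact_mod_cast hF2
  have hDq : (D : ℚ) ^ 2 = A ^ 2 + C ^ 2 := by exact_mod_cast h.hD
  have hGq : (G : ℚ) ^ 2 = A ^ 2 + B ^ 2 + C ^ 2 := by exact_mod_cast h.hG
  have hl := one_lt_norm_div (p := 2)
    (m := 3 * g ^ 2 * B' ^ 4 - 2 * (F ^ 2 + G ^ 2) * B' ^ 2 + F' ^ 2 * G ^ 2)
    (n := 2 * (B' * C' * D)) ?_ ⟨_, rfl⟩
    (by have := h.posD; positivity)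
  · refine infinite_of_slope (x₁ := (B : ℚ) ^ 2) (x₂ := (B : ℚ) ^ 2) (y₁ := B * C * D)
      (y₂ := B * C * D) (p := 2) ?_ ?_ ?_ ?_ ?_ (by ring) ?_ hl
    · exact neg_mem (add_mem (pow_mem (hint F) 2) (pow_mem (hint G) 2))
    · exact mul_mem (pow_mem (hint F) 2) (pow_mem (hint G) 2)
    · exact pow_mem (hint B) 2
    · exact pow_mem (hint B) 2
    · have : (F : ℚ) ^ 2 = B ^ 2 + C ^ 2 := by exact_mod_cast h.hF
      rw [mul_pow, mul_pow, hDq, this, hGq]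
      ring
    · push_cast
      rw [hBq, hCq, hFq]
      field_simp
      ring
  · obtain ⟨j, hj⟩ : (2 : ℤ) ∣ B' := by omega
    have hodd : Odd (F' ^ 2 * G ^ 2) :=
      ((Int.odd_iff.mpr hF'odd).pow).mul ((Int.odd_iff.mpr h.odd_G).pow)
    obtain ⟨k, hk⟩ := hodd
    rw [hk, hj]
    intro hdvd
    have h2 : (2 : ℤ) ∣ 3 * g ^ 2 * (2 * j) ^ 4 - 2 * (F ^ 2 + G ^ 2) * (2 * j) ^ 2 + 2 * k :=
      ⟨24 * g ^ 2 * j ^ 4 - 4 * (F ^ 2 + G ^ 2) * j ^ 2 + k, by ring⟩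
    have h3 := dvd_sub hdvd h2
    push_cast at h3
    ring_nf at h3
    omega

/-! ### The curve `y² = x (x - A⁴) (x + G⁴ - A⁴)` -/

/-- The chord through the point with `x = (AFD / B)²` and the point of order four
`(A² (A² + G²), σ A² G² (A² + G²))`, `σ = ±1`, has slope
`(F'²C'D'E' - σB'³(D'² + E'²)) / (B'N)`; here `B = gB'`, `C = gC'`, `F = gF'`, `D = dD'` and
`E = dE'`. If `p` divides `N` but neither `B'` nor the numerator, the curve has infinitely many
points. -/
lemma infinite_quartic_of_slope {p : ℕ} [Fact p.Prime] {A G g d B' C' D' E' F' N σ : ℤ}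
    (hA : A ≠ 0) (hG : G ≠ 0) (hd : d ≠ 0) (hB' : B' ≠ 0) (hN0 : N ≠ 0)
    (hDE : (d * D') ^ 2 = A ^ 2 + (g * C') ^ 2) (hDE' : (d * E') ^ 2 = A ^ 2 + (g * B') ^ 2)
    (hF2 : F' ^ 2 = B' ^ 2 + C' ^ 2) (hG2 : G ^ 2 = A ^ 2 + (g * B') ^ 2 + (g * C') ^ 2)
    (hN : C' ^ 2 - B' ^ 2 = d ^ 2 * N) (hσ : σ ^ 2 = 1) (hpN : (p : ℤ) ∣ N)
    (hpB : ¬ (p : ℤ) ∣ B')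
    (hσp : ¬ (p : ℤ) ∣ F' ^ 2 * C' * D' * E' - σ * (B' ^ 3 * (D' ^ 2 + E' ^ 2))) :
    (curvePts ((G : ℚ) ^ 4 - 2 * (A : ℚ) ^ 4)
      (-((A : ℚ) ^ 4 * ((G : ℚ) ^ 4 - (A : ℚ) ^ 4)))).Infinite := by
  have hl := one_lt_norm_div hσp (n := B' * N) (hpN.mul_left _) (mul_ne_zero hB' hN0)
  have hint : ∀ n : ℤ, (n : ℚ) ∈ pInt p := intCast_mem_pInt
  have hdQ : (d : ℚ) ≠ 0 := by exact_mod_cast hd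
  have hAQ : (A : ℚ) ≠ 0 := by exact_mod_cast hA
  have hGQ : (G : ℚ) ≠ 0 := by exact_mod_cast hG
  have hBQ : (B' : ℚ) ≠ 0 := by exact_mod_cast hB'
  have hNQ : (N : ℚ) ≠ 0 := by exact_mod_cast hN0
  have hσq : (σ : ℚ) ^ 2 = 1 := by exact_mod_cast hσ
  have hF2q : (F' : ℚ) ^ 2 = B' ^ 2 + C' ^ 2 := by exact_mod_cast hF2
  have hNq : (C' : ℚ) ^ 2 - B' ^ 2 = d ^ 2 * N := by exact_mod_cast hN
  have hDq : ((d : ℚ) * D') ^ 2 = A ^ 2 + (g * C') ^ 2 := by exact_mod_cast hDE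
  have hEq : ((d : ℚ) * E') ^ 2 = A ^ 2 + (g * B') ^ 2 := by exact_mod_cast hDE'
  have hGq : (G : ℚ) ^ 2 = A ^ 2 + (g * B') ^ 2 + (g * C') ^ 2 := by exact_mod_cast hG2
  -- `(x₁, y₁)` is the point given by the cuboid and `(x₂, y₂)` the point of order four
  obtain ⟨x₁, hx₁⟩ : ∃ x₁ : ℚ, x₁ = (A * F' * (d * D') / B') ^ 2 := ⟨_, rfl⟩
  obtain ⟨y₁, hy₁⟩ : ∃ y₁ : ℚ, y₁ = A ^ 2 * F' ^ 2 * G ^ 2 * C' * (d * D') * (d * E') / B' ^ 3 :=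
    ⟨_, rfl⟩
  obtain ⟨x₂, hx₂⟩ : ∃ x₂ : ℚ, x₂ = A ^ 2 * (A ^ 2 + G ^ 2) := ⟨_, rfl⟩
  obtain ⟨y₂, hy₂⟩ : ∃ y₂ : ℚ, y₂ = σ * (A ^ 2 * G ^ 2 * (A ^ 2 + G ^ 2)) := ⟨_, rfl⟩
  have hA4 : x₁ - A ^ 4 = (A * G * C' / B') ^ 2 := by
    have e : (F' : ℚ) ^ 2 * (d * D') ^ 2 - A ^ 2 * B' ^ 2 = G ^ 2 * C' ^ 2 := by
      rw [hF2q, hDq, hGq]; ring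
    rw [hx₁, div_pow, div_pow, eq_div_iff (pow_ne_zero 2 hBQ), sub_mul,
      div_mul_cancel₀ _ (pow_ne_zero 2 hBQ)]
    linear_combination (A : ℚ) ^ 2 * e
  have hG4 : x₁ + G ^ 4 - A ^ 4 = (F' * G * (d * E') / B') ^ 2 := by
    have e : (A : ℚ) ^ 2 * (d * D') ^ 2 + g ^ 2 * B' ^ 2 * (G ^ 2 + A ^ 2) = G ^ 2 * (d * E') ^ 2 := by
      rw [hDq, hEq, hGq]; ring
    have e' : (G : ℚ) ^ 4 - A ^ 4 = g ^ 2 * F' ^ 2 * (G ^ 2 + A ^ 2) := by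
      linear_combination (G ^ 2 + A ^ 2 : ℚ) * hGq - (G ^ 2 + A ^ 2 : ℚ) * g ^ 2 * hF2q
    rw [add_sub_assoc, e', hx₁, div_pow, div_pow, eq_div_iff (pow_ne_zero 2 hBQ), add_mul,
      div_mul_cancel₀ _ (pow_ne_zero 2 hBQ)]
    linear_combination (F' : ℚ) ^ 2 * e
  have hP₁ : y₁ ^ 2 = x₁ ^ 3 + ((G : ℚ) ^ 4 - 2 * (A : ℚ) ^ 4) * x₁ ^ 2 +
      (-((A : ℚ) ^ 4 * ((G : ℚ) ^ 4 - (A : ℚ) ^ 4))) * x₁ := by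
    have : x₁ ^ 3 + ((G : ℚ) ^ 4 - 2 * (A : ℚ) ^ 4) * x₁ ^ 2 +
      (-((A : ℚ) ^ 4 * ((G : ℚ) ^ 4 - (A : ℚ) ^ 4))) * x₁ =
      x₁ * (x₁ - A ^ 4) * (x₁ + G ^ 4 - A ^ 4) := by ring
    rw [this, hA4, hG4, hx₁, hy₁]
    field_simp
  have hP₂ : y₂ ^ 2 = x₂ ^ 3 + ((G : ℚ) ^ 4 - 2 * (A : ℚ) ^ 4) * x₂ ^ 2 +
      (-((A : ℚ) ^ 4 * ((G : ℚ) ^ 4 - (A : ℚ) ^ 4))) * x₂ := by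
    rw [hy₂, hx₂, mul_pow, hσq]; ring
  have hxdiff : x₁ - x₂ = A ^ 2 * G ^ 2 * (d ^ 2 * N) / B' ^ 2 := by
    have : x₁ - x₂ = (x₁ - A ^ 4) - A ^ 2 * G ^ 2 := by rw [hx₂]; ring
    rw [this, hA4, ← hNq]; field_simp
  have hx12 : x₁ - x₂ ≠ 0 := by rw [hxdiff]; positivity
  have hline : ((F' ^ 2 * C' * D' * E' - σ * (B' ^ 3 * (D' ^ 2 + E' ^ 2)) : ℤ) : ℚ) /
      ((B' * N : ℤ) : ℚ) * (x₁ - x₂) = y₁ - y₂ := by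
    have hAG : (A : ℚ) ^ 2 + G ^ 2 = d ^ 2 * (D' ^ 2 + E' ^ 2) := by
      linear_combination hGq - hDq - hEq
    rw [hxdiff, hy₁, hy₂, hAG]
    push_cast
    field_simp
  refine infinite_of_slope (p := p) (x₁ := x₁) (x₂ := x₂) (y₁ := y₁) (y₂ := y₂)
    ?_ ?_ ?_ ?_ hP₁ hline ?_ hl
  · exact sub_mem (pow_mem (hint G) 4) (mul_mem (hint 2) (pow_mem (hint A) 4))
  · exact neg_mem (mul_mem (pow_mem (hint A) 4) (sub_mem (pow_mem (hint G) 4) (pow_mem (hint A) 4)))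
  · have h1 : (A * F' * (d * D') / B' : ℚ) ∈ pInt p := by
      rw [mem_pInt, padicNorm.div, (padicNorm.int_eq_one_iff B').mpr hpB, div_one]
      exact mul_mem (mul_mem (hint A) (hint F')) (mul_mem (hint d) (hint D'))
    rw [hx₁]
    exact pow_mem h1 2
  · rw [hx₂]; exact mul_mem (pow_mem (hint A) 2) (add_mem (pow_mem (hint A) 2) (pow_mem (hint G) 2))
  · refine mul_left_cancel₀ hx12 ?_
    linear_combination (y₁ + y₂) * hline + hP₁ - hP₂


/-- Any prime `p` dividing the odd integer `N` with `C'² - B'² = d² N` and `D'² - E'² = g² N` fails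
to divide `2`, `B'`, `C'`, `D'`, `E'` and `F'`, so for one of the signs `σ = ±1` the chord of
`infinite_quartic_of_slope` has a slope that is not `p`-integral. Such a `p` exists: if `N = ±1`,
then `C'² - B'² = ±d²` and `C'² + B'² = F'²`, against Fermat's theorem. -/
theorem infinite_quartic (h : PrimitiveCuboid A B C D E F G) :
    (curvePts ((G : ℚ) ^ 4 - 2 * (A : ℚ) ^ 4)
      (-((A : ℚ) ^ 4 * ((G : ℚ) ^ 4 - (A : ℚ) ^ 4)))).Infinite := by
  obtain ⟨g, B', C', hg, hB', hC', hcop, hB, hC⟩ := exists_coprime_factor h.posB h.posC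
  obtain ⟨d, D', E', hd, hD', hE', hcop', hD, hE⟩ := exists_coprime_factor h.posD h.posE
  have hFdvd : g ∣ F := by
    have : g ^ 2 ∣ F ^ 2 := ⟨B' ^ 2 + C' ^ 2, by rw [h.hF, hB, hC]; ring⟩
    exact (Int.pow_dvd_pow_iff two_ne_zero).mp this
  obtain ⟨F', hF'⟩ := hFdvd
  have hF2 : F' ^ 2 = B' ^ 2 + C' ^ 2 := by
    have : g ^ 2 * (F' ^ 2 - (B' ^ 2 + C' ^ 2)) = 0 := by
      have := h.hF
      rw [hB, hC, hF'] at this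
      linear_combination this
    have := (mul_eq_zero.mp this).resolve_left (by positivity)
    linarith
  have hpar := opposite_parity hcop hF2
  have hDE := h.hD
  have hDE' := h.hE
  rw [hD, hC] at hDE
  rw [hE, hB] at hDE'
  have hgd : IsCoprime g d := by
    refine isCoprime_of_prime_dvd (fun h0 => hg.ne' h0.1) ?_
    intro r hr h1 h2
    refine h.prim r hr ?_ (hB ▸ h1.mul_right _) (hC ▸ h1.mul_right _)
    refine hr.dvd_of_dvd_pow (n := 2) ?_
    have : A ^ 2 = d * (d * D' ^ 2) - g * (g * C' ^ 2) := by linear_combination -hDE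
    rw [this]
    exact dvd_sub (h2.mul_right _) (h1.mul_right _)
  obtain ⟨N, hN⟩ : d ^ 2 ∣ C' ^ 2 - B' ^ 2 := by
    refine IsCoprime.dvd_of_dvd_mul_left (hgd.symm.pow (m := 2) (n := 2)) ?_
    exact ⟨D' ^ 2 - E' ^ 2, by linear_combination hDE' - hDE⟩
  have hN' : D' ^ 2 - E' ^ 2 = g ^ 2 * N := by
    have : d ^ 2 * (D' ^ 2 - E' ^ 2 - g ^ 2 * N) = 0 := by
      linear_combination hDE - hDE' + g ^ 2 * hN
    have := (mul_eq_zero.mp this).resolve_left (by positivity)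
    linarith
  have hCBodd : (C' ^ 2 - B' ^ 2) % 2 = 1 := by
    obtain ⟨k, hk⟩ : ∃ k, C' = 2 * k + 1 - B' := ⟨(B' + C') / 2, by omega⟩
    rw [hk]; ring_nf; omega
  have hNodd : N % 2 = 1 := by
    by_contra hcon
    obtain ⟨k, rfl⟩ : (2 : ℤ) ∣ N := by omega
    have : (2 : ℤ) ∣ C' ^ 2 - B' ^ 2 := ⟨d ^ 2 * k, by rw [hN]; ring⟩
    omega
  have hN0 : N ≠ 0 := by rintro rfl; simp at hNodd
  have hdodd : d % 2 = 1 := by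
    by_contra hcon
    obtain ⟨k, hk⟩ : (2 : ℤ) ∣ d := by omega
    have : (2 : ℤ) ∣ C' ^ 2 - B' ^ 2 := ⟨2 * k ^ 2 * N, by rw [hN, hk]; ring⟩
    omega
  have hF'odd : F' % 2 = 1 := by
    rcases Int.even_or_odd' F' with ⟨i, hi | hi⟩
    · exfalso
      have : (C' ^ 2 - B' ^ 2) = 2 * (2 * i ^ 2 - B' ^ 2) := by rw [hi] at hF2; linarith
      omega
    · omega
  have hN1 : N.natAbs ≠ 1 := by
    intro h1
    rcases Int.natAbs_eq_iff.mp h1 with h1 | h1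
    · rw [h1] at hN
      exact no_sq_add_sq_sub hB'.ne' hcop.symm hdodd hF'odd (by rw [hN]; simp) (by rw [hF2]; ring)
    · rw [h1] at hN
      push_cast at hN
      exact no_sq_add_sq_sub hC'.ne' hcop hdodd hF'odd (by linarith) (by rw [hF2])
  obtain ⟨p, hp, hpN⟩ := Nat.exists_prime_and_dvd hN1
  rw [← Int.natCast_dvd] at hpN
  have : Fact p.Prime := ⟨hp⟩
  have hpZ : Prime (p : ℤ) := Nat.prime_iff_prime_int.mp hp
  have hp2 : ¬ (p : ℤ) ∣ 2 := by
    intro h2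
    have h3 := (Nat.prime_dvd_prime_iff_eq hp Nat.prime_two).mp (by exact_mod_cast h2)
    rw [h3] at hpN
    push_cast at hpN
    omega
  have key : ∀ x y : ℤ, IsCoprime x y → (p : ℤ) ∣ x ^ 2 - y ^ 2 → ¬ (p : ℤ) ∣ x ∧ ¬ (p : ℤ) ∣ y := by
    intro x y hxy hdvd
    constructor <;> intro hx
    · have : (p : ℤ) ∣ y ^ 2 := by
        have := dvd_sub (dvd_pow hx two_ne_zero) hdvd
        simpa using this
      exact hpZ.not_isUnit (hxy.isUnit_of_dvd' hx (hpZ.dvd_of_dvd_pow this))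
    · have : (p : ℤ) ∣ x ^ 2 := by
        have := dvd_add (dvd_pow hx two_ne_zero) hdvd
        simpa using this
      exact hpZ.not_isUnit (hxy.isUnit_of_dvd' (hpZ.dvd_of_dvd_pow this) hx)
  obtain ⟨hpC, hpB⟩ := key C' B' hcop.symm (hN ▸ hpN.mul_left _)
  obtain ⟨hpD, hpE⟩ := key D' E' hcop' (hN' ▸ hpN.mul_left _)
  have hpF : ¬ (p : ℤ) ∣ F' := by
    intro hx
    have h1 : (p : ℤ) ∣ 2 * B' ^ 2 := by
      have := dvd_sub (dvd_pow hx two_ne_zero) (hN ▸ hpN.mul_left _ : (p : ℤ) ∣ C' ^ 2 - B' ^ 2)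
      rw [hF2] at this
      obtain ⟨k, hk⟩ := this
      exact ⟨k, by linear_combination hk⟩
    rcases hpZ.dvd_or_dvd h1 with h2 | h2
    · exact hp2 h2
    · exact hpB (hpZ.dvd_of_dvd_pow h2)
  -- the numerators for the two signs add up to `2 * F' ^ 2 * C' * D' * E'`, a `p`-adic unit
  obtain ⟨σ, hσ, hσp⟩ : ∃ σ : ℤ, σ ^ 2 = 1 ∧
      ¬ (p : ℤ) ∣ F' ^ 2 * C' * D' * E' - σ * (B' ^ 3 * (D' ^ 2 + E' ^ 2)) := by
    by_contra! hcon
    have h1 := hcon 1 (by norm_num)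
    have h2 := hcon (-1) (by norm_num)
    have h3 : (p : ℤ) ∣ 2 * F' ^ 2 * C' * D' * E' := by
      have := dvd_add h1 h2
      obtain ⟨k, hk⟩ := this
      exact ⟨k, by linear_combination hk⟩
    rcases hpZ.dvd_or_dvd h3 with h3 | h3
    · rcases hpZ.dvd_or_dvd h3 with h3 | h3
      · rcases hpZ.dvd_or_dvd h3 with h3 | h3
        · rcases hpZ.dvd_or_dvd h3 with h3 | h3
          · exact hp2 h3
          · exact hpF (hpZ.dvd_of_dvd_pow h3)
        · exact hpC h3
      · exact hpD h3
    · exact hpE h3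
  exact infinite_quartic_of_slope h.posA.ne' h.posG.ne' hd.ne' hB'.ne' hN0 hDE hDE' hF2
    (by rw [h.hG, hB, hC]) hN hσ hpN hpB hσp

end PrimitiveCuboid

/-! ### Reduction to primitive cuboids and rescaling -/

/-- Dividing a perfect cuboid by the common divisor of its edges preserves the proportion `A : F`;
it is enough to treat primitive cuboids. -/
lemma exists_primitive {a b c f D E G : ℤ} (ha : 0 < a) (hb : 0 < b) (hc : 0 < c) (hf : 0 < f)
    (hD : D ^ 2 = a ^ 2 + c ^ 2) (hE : E ^ 2 = a ^ 2 + b ^ 2) (hF : f ^ 2 = b ^ 2 + c ^ 2)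
    (hG : G ^ 2 = a ^ 2 + b ^ 2 + c ^ 2) :
    ∃ k A B C D' E' F G' : ℤ, 0 < k ∧ PrimitiveCuboid A B C D' E' F G' ∧ a = k * A ∧ f = k * F := by
  obtain ⟨g, b', c', hg, hb', hc', hbc, rfl, rfl⟩ := exists_coprime_factor hb hc
  obtain ⟨k, a', g', hk, ha', hg', hag, rfl, rfl⟩ := exists_coprime_factor ha hg
  have root : ∀ x m : ℤ, 0 < m → x ^ 2 = k ^ 2 * m → ∃ y : ℤ, 0 < y ∧ |x| = k * y ∧ y ^ 2 = m := by
    intro x m hm hx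
    obtain ⟨y, hy⟩ : k ∣ x := (Int.pow_dvd_pow_iff two_ne_zero).mp ⟨m, hx⟩
    have hym : y ^ 2 = m := by
      have : k ^ 2 * y ^ 2 = k ^ 2 * m := by rw [← hx, hy]; ring
      exact mul_left_cancel₀ (by positivity) this
    refine ⟨|y|, abs_pos.mpr ?_, by rw [hy, abs_mul, abs_of_pos hk], by rw [sq_abs, hym]⟩
    rintro rfl
    simp at hym
    omega
  obtain ⟨D', hD0, -, hD'⟩ := root D (a' ^ 2 + (g' * c') ^ 2) (by positivity) (by rw [hD]; ring)
  obtain ⟨E', hE0, -, hE'⟩ := root E (a' ^ 2 + (g' * b') ^ 2) (by positivity) (by rw [hE]; ring)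
  obtain ⟨F', hF0, hfF, hF'⟩ := root f ((g' * b') ^ 2 + (g' * c') ^ 2) (by positivity)
    (by rw [hF]; ring)
  obtain ⟨G', hG0, -, hG'⟩ := root G (a' ^ 2 + (g' * b') ^ 2 + (g' * c') ^ 2) (by positivity)
    (by rw [hG]; ring)
  rw [abs_of_pos hf] at hfF
  refine ⟨k, a', g' * b', g' * c', D', E', F', G', hk,
    ⟨ha', by positivity, by positivity, hD0, hE0, hF0, hG0, hD', hE', hF', hG', ?_⟩, rfl, hfF⟩
  intro r hr h1 h2 h3
  by_cases hrg : r ∣ g'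
  · exact hr.not_isUnit (hag.isUnit_of_dvd' h1 hrg)
  · exact hr.not_isUnit (hbc.isUnit_of_dvd' ((hr.dvd_or_dvd h2).resolve_left hrg)
      ((hr.dvd_or_dvd h3).resolve_left hrg))

/-- The triangle with legs `A`, `F` and hypotenuse `G` is similar to the one with legs `m`, `n` and
hypotenuse `s`. -/
lemma PrimitiveCuboid.exists_ratio {A B C D E F G : ℤ} (h : PrimitiveCuboid A B C D E F G)
    {m n s : ℚ} (hm : 0 < m) (hs : m ^ 2 + n ^ 2 = s ^ 2) (hAF : A * n = F * m) :
    ∃ κ : ℚ, κ ≠ 0 ∧ (A : ℚ) = κ * m ∧ (F : ℚ) = κ * n ∧ (G : ℚ) ^ 2 = κ ^ 2 * s ^ 2 := by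
  have hA : (0 : ℚ) < A := by exact_mod_cast h.posA
  have h1 : (A : ℚ) = A / m * m := by field_simp
  have h2 : (F : ℚ) = A / m * n := by field_simp; linarith
  have hG : (G : ℚ) ^ 2 = A ^ 2 + F ^ 2 := by
    have := h.hG
    have h3 := h.hF
    exact_mod_cast (by rw [this, h3]; ring : G ^ 2 = A ^ 2 + F ^ 2)
  refine ⟨A / m, by positivity, h1, h2, ?_⟩
  rw [hG, ← hs]
  linear_combination ((A : ℚ) + A / m * m) * h1 + ((F : ℚ) + A / m * n) * h2

/-- The form shared by EI1 and EI2: roots `0`, `m⁴` and `m⁴ - s⁴`. -/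
lemma PrimitiveCuboid.not_finite_quartic {A B C D E F G : ℤ} (h : PrimitiveCuboid A B C D E F G)
    {m n s : ℚ} (hm : 0 < m) (hs : m ^ 2 + n ^ 2 = s ^ 2) (hAF : A * n = F * m)
    (hfin : (curvePts (s ^ 4 - 2 * m ^ 4) (-(m ^ 4 * (s ^ 4 - m ^ 4)))).Finite) : False := by
  obtain ⟨κ, hκ, hA, -, hG⟩ := h.exists_ratio hm hs hAF
  refine h.infinite_quartic ?_
  have hG4 : (G : ℚ) ^ 4 = κ ^ 4 * s ^ 4 := by
    linear_combination ((G : ℚ) ^ 2 + κ ^ 2 * s ^ 2) * hG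
  convert curvePts_finite_scale (pow_ne_zero 2 hκ) hfin using 2
  · rw [hG4, hA]; ring
  · rw [hG4, hA]; ring

/-- The form shared by EI3 and EI4: roots `0`, `n²` and `s²`. -/
lemma PrimitiveCuboid.not_finite_quadratic {A B C D E F G : ℤ} (h : PrimitiveCuboid A B C D E F G)
    {m n s : ℚ} (hm : 0 < m) (hs : m ^ 2 + n ^ 2 = s ^ 2) (hAF : A * n = F * m)
    (hfin : (curvePts (-(n ^ 2 + s ^ 2)) (n ^ 2 * s ^ 2)).Finite) : False := by
  obtain ⟨κ, hκ, -, hF, hG⟩ := h.exists_ratio hm hs hAF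
  refine h.infinite_quadratic ?_
  convert curvePts_finite_scale hκ hfin using 2
  · rw [hG, hF]; ring
  · rw [hG, hF]; ring

/-- If both EI1 and EI2, or both EI3 and EI4, have only finitely many rational points,
then no perfect cuboid has an internal rectangle with aspect ratio `(p²−q²) : 2pq`. -/
theorem no_perfect_cuboid_with_internal_ratio
    (p q : ℤ) (hq : 0 < q) (hqp : q < p) (hcop : IsCoprime p q) (hpar : p % 2 ≠ q % 2)
    (h : ((EI1 p q).Finite ∧ (EI2 p q).Finite) ∨ ((EI3 p q).Finite ∧ (EI4 p q).Finite)) :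
    ¬ ∃ a b c : ℤ, 0 < a ∧ 0 < b ∧ 0 < c ∧
      IsSquare (a ^ 2 + b ^ 2) ∧ IsSquare (a ^ 2 + c ^ 2) ∧ IsSquare (b ^ 2 + c ^ 2) ∧
      IsSquare (a ^ 2 + b ^ 2 + c ^ 2) ∧
      ∃ f : ℤ, f ^ 2 = b ^ 2 + c ^ 2 ∧
        (a * (2 * p * q) = f * (p ^ 2 - q ^ 2) ∨ f * (2 * p * q) = a * (p ^ 2 - q ^ 2)) := by
  rintro ⟨a, b, c, ha, hb, hc, ⟨E, hE⟩, ⟨D, hD⟩, -, ⟨G, hG⟩, f, hf, hcase⟩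
  have hp : 0 < p := hq.trans hqp
  have hpq : 0 < p ^ 2 - q ^ 2 := by nlinarith
  have hf0 : 0 < f := by
    rcases hcase with h1 | h1
    · exact pos_of_mul_pos_left (h1 ▸ by positivity) hpq.le
    · exact pos_of_mul_pos_left (h1 ▸ by positivity : 0 < f * (2 * p * q)) (by positivity)
  obtain ⟨k, A, B, C, D', E', F, G', hk, hcub, rfl, rfl⟩ :=
    exists_primitive (D := D) (E := E) (G := G) ha hb hc hf0 (by rw [hD]; ring) (by rw [hE]; ring)
      hf (by rw [hG]; ring)
  have hm₁ : (0 : ℚ) < (p : ℚ) ^ 2 - (q : ℚ) ^ 2 := by exact_mod_cast hpq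
  have hm₂ : (0 : ℚ) < 2 * (p : ℚ) * q := by exact_mod_cast (by positivity : 0 < 2 * p * q)
  have hs₁ : ((p : ℚ) ^ 2 - (q : ℚ) ^ 2) ^ 2 + (2 * (p : ℚ) * q) ^ 2 = ((p : ℚ) ^ 2 + q ^ 2) ^ 2 := by
    ring
  have hs₂ : (2 * (p : ℚ) * q) ^ 2 + ((p : ℚ) ^ 2 - (q : ℚ) ^ 2) ^ 2 = ((p : ℚ) ^ 2 + q ^ 2) ^ 2 := by
    ring
  rcases hcase with h1 | h1
  · have hAF : (A : ℚ) * (2 * p * q) = F * ((p : ℚ) ^ 2 - q ^ 2) := by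
      have : A * (2 * p * q) = F * (p ^ 2 - q ^ 2) :=
        mul_left_cancel₀ hk.ne' (by linear_combination h1)
      exact_mod_cast this
    rcases h with ⟨hfin, -⟩ | ⟨-, hfin⟩
    · refine hcub.not_finite_quartic hm₁ hs₁ hAF ?_
      convert hfin using 1
      ext P
      simp only [curvePts, EI1, Set.mem_ofPred_eq]
      ring_nf
    · refine hcub.not_finite_quadratic hm₁ hs₁ hAF ?_
      convert hfin using 1
      ext P
      simp only [curvePts, EI4, Set.mem_ofPred_eq]
      ring_nf
  · have hAF : (A : ℚ) * ((p : ℚ) ^ 2 - q ^ 2) = F * (2 * p * q) := by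
      have : A * (p ^ 2 - q ^ 2) = F * (2 * p * q) :=
        mul_left_cancel₀ hk.ne' (by linear_combination -h1)
      exact_mod_cast this
    rcases h with ⟨-, hfin⟩ | ⟨hfin, -⟩
    · refine hcub.not_finite_quartic hm₂ hs₂ hAF ?_
      convert hfin using 1
      ext P
      simp only [curvePts, EI2, Set.mem_ofPred_eq]
      ring_nf
    · refine hcub.not_finite_quadratic hm₂ hs₂ hAF ?_
      convert hfin using 1
      ext P
      simp only [curvePts, EI3, Set.mem_ofPred_eq]
      ring_nf
end

section
/- Let (p,q) be admissible. If both the curve EI1: y² = x(x−(p²−q²)⁴)(x+8p²q²(p⁴+q⁴)) and the curve EI2: y² = x(x−16p⁴q⁴)(x+(p²+q²)⁴−16p⁴q⁴) have only finitely many rational points, then there do not exist positive integers α, φ, b, c and a squarefree positive integer M such that α·2pq = φ·(p²−q²), α²+φ² is a perfect square, b²+c² = M·φ², and M·α²+b² and M·α²+c² are both perfect squares. (The case M = 1 says no perfect cuboid has an internal rectangle with aspect ratio (p²−q²):2pq; the case M > 1 says no I-BPC has a Pythagorean internal rectangle with that aspect ratio.) -/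
/-- The nonzero rationals `s` for which `s²`, `s² + u⁴` and `s² + w⁴` are all squares. They are the
square roots of the abscissas of points of `y² = x (x + u⁴) (x + w⁴)` that are doubles of
rational points, apart from the point `(0, 0)`. -/
def doubledAbscissaRoots (u w : ℤ) : Set ℚ :=
  {s | s ≠ 0 ∧ IsSquare (s ^ 2 + (u : ℚ) ^ 4) ∧ IsSquare (s ^ 2 + (w : ℚ) ^ 4)}

/-- If `s ^ 2 + u ^ 4` is a rational square, then homogenising gives an integer square. -/
lemma exists_int_sq {s : ℚ} {u : ℤ} (h : IsSquare (s ^ 2 + (u : ℚ) ^ 4)) :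
    ∃ k : ℤ, s.num ^ 2 + u ^ 4 * (s.den : ℤ) ^ 2 = k ^ 2 := by
  obtain ⟨r, hr⟩ := h
  have hs : (s.num : ℚ) = s * s.den := (Rat.mul_den_eq_num s).symm
  have key : IsSquare (((s.num ^ 2 + u ^ 4 * (s.den : ℤ) ^ 2 : ℤ)) : ℚ) := by
    refine ⟨r * s.den, ?_⟩
    push_cast
    rw [hs]
    linear_combination (s.den : ℚ) ^ 2 * hr
  rw [Rat.isSquare_intCast_iff] at key
  obtain ⟨k, hk⟩ := key
  exact ⟨k, by rw [hk, sq]⟩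

/-- Otherwise `k ^ 2` would be a sum of two odd squares, hence `2` modulo `4`. -/
lemma not_odd_odd {m n u k : ℤ} (hu : Odd u) (h : m ^ 2 + u ^ 4 * n ^ 2 = k ^ 2) :
    ¬ (Odd m ∧ Odd n) := by
  rintro ⟨hm, hn⟩
  have h1 : m ^ 2 % 4 = 1 := Int.sq_mod_four_eq_one_of_odd hm
  have h2 : (u ^ 2 * n) ^ 2 % 4 = 1 := Int.sq_mod_four_eq_one_of_odd (hu.pow.mul hn)
  have h3 : k ^ 2 = m ^ 2 + (u ^ 2 * n) ^ 2 := by rw [← h]; ring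
  rcases Int.even_or_odd k with hk | hk
  · obtain ⟨j, rfl⟩ := hk
    have : (j + j) ^ 2 = 4 * j ^ 2 := by ring
    omega
  · have h4 : k ^ 2 % 4 = 1 := Int.sq_mod_four_eq_one_of_odd hk
    omega

lemma padicValRat_two_odd {z : ℤ} (hz : Odd z) : padicValRat 2 (z : ℚ) = 0 := by
  rw [padicValRat.of_int, padicValInt.eq_zero_of_not_dvd]
  · rfl
  · have := Int.odd_iff.mp hz
    omega

/-- Doubling the point with abscissa `s ^ 2` strictly increases the absolute value of the
2-adic valuation of `s`. -/
lemma exists_larger_val {u w : ℤ} (hu : Odd u) (hw : Odd w) {s : ℚ}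
    (hs : s ∈ doubledAbscissaRoots u w) :
    ∃ s' ∈ doubledAbscissaRoots u w, |padicValRat 2 s| < |padicValRat 2 s'| := by
  obtain ⟨hs0, hsu, hsw⟩ := hs
  obtain ⟨k, hk⟩ := exists_int_sq hsu
  obtain ⟨l, hl⟩ := exists_int_sq hsw
  have hm0 : s.num ≠ 0 := Rat.num_ne_zero.mpr hs0
  have hn0 : (s.den : ℤ) ≠ 0 := by exact_mod_cast s.den_nz
  have hcop : ¬ (Even s.num ∧ Even (s.den : ℤ)) := by
    rintro ⟨h1, h2⟩
    have := Int.isUnit_iff.mp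
      ((Rat.isCoprime_num_den s).isUnit_of_dvd' h1.two_dvd h2.two_dvd)
    omega
  have hsm : s = (s.num : ℚ) / ((s.den : ℤ) : ℚ) := by
    rw [Int.cast_natCast]; exact (Rat.num_div_den s).symm
  generalize s.num = m at *
  generalize (s.den : ℤ) = n at *
  subst hsm
  have hnodd := not_odd_odd hu hk
  have hpar : Odd m ∧ Even n ∨ Even m ∧ Odd n := by
    rw [← Int.not_even_iff_odd, ← Int.not_even_iff_odd] at *
    tauto
  have hu4 : Odd (u ^ 4) := hu.pow
  have hw4 : Odd (w ^ 4) := hw.pow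
  have hkodd : Odd k := by
    rw [← Int.odd_pow' two_ne_zero, ← hk]
    rcases hpar with ⟨h, h'⟩ | ⟨h, h'⟩
    · exact h.pow.add_even ((h'.pow_of_ne_zero two_ne_zero).mul_left _)
    · exact (h.pow_of_ne_zero two_ne_zero).add_odd (hu4.mul h'.pow)
  have hlodd : Odd l := by
    rw [← Int.odd_pow' two_ne_zero, ← hl]
    rcases hpar with ⟨h, h'⟩ | ⟨h, h'⟩
    · exact h.pow.add_even ((h'.pow_of_ne_zero two_ne_zero).mul_left _)
    · exact (h.pow_of_ne_zero two_ne_zero).add_odd (hw4.mul h'.pow)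
  have hNodd : Odd (m ^ 4 - u ^ 4 * w ^ 4 * n ^ 4) := by
    rcases hpar with ⟨h, h'⟩ | ⟨h, h'⟩
    · exact h.pow.sub_even ((h'.pow_of_ne_zero four_ne_zero).mul_left _)
    · exact (h.pow_of_ne_zero four_ne_zero).sub_odd ((hu4.mul hw4).mul h'.pow)
  have ne0 : ∀ {z : ℤ}, Odd z → (z : ℚ) ≠ 0 := by
    rintro z hz h
    have : z = 0 := by exact_mod_cast h
    subst this
    simp at hz
  have hkq := ne0 hkodd
  have hlq := ne0 hlodd
  have hNq := ne0 hNodd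
  have hmq : (m : ℚ) ≠ 0 := by exact_mod_cast hm0
  have hnq : (n : ℚ) ≠ 0 := by exact_mod_cast hn0
  have hkk : (m : ℚ) ^ 2 + u ^ 4 * n ^ 2 = k ^ 2 := by exact_mod_cast hk
  have hll : (m : ℚ) ^ 2 + w ^ 4 * n ^ 2 = l ^ 2 := by exact_mod_cast hl
  refine ⟨((m ^ 4 - u ^ 4 * w ^ 4 * n ^ 4 : ℤ) : ℚ) / (2 * m * n * k * l), ⟨?_, ?_, ?_⟩, ?_⟩
  · positivity
  · refine ⟨((m : ℚ) ^ 4 + 2 * u ^ 4 * m ^ 2 * n ^ 2 + u ^ 4 * w ^ 4 * n ^ 4) /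
      (2 * m * n * k * l), ?_⟩
    push_cast
    field_simp
    rw [← hkk, ← hll]
    ring
  · refine ⟨((m : ℚ) ^ 4 + 2 * w ^ 4 * m ^ 2 * n ^ 2 + u ^ 4 * w ^ 4 * n ^ 4) /
      (2 * m * n * k * l), ?_⟩
    push_cast
    field_simp
    rw [← hkk, ← hll]
    ring
  · have h2 : padicValRat 2 (2 : ℚ) = 1 := by
      exact_mod_cast padicValRat.self (p := 2) (by norm_num)
    rw [padicValRat.div hmq hnq, padicValRat.div hNq (by positivity),
      padicValRat.mul (by positivity) hlq, padicValRat.mul (by positivity) hkq,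
      padicValRat.mul (by positivity) hnq, padicValRat.mul (by positivity) hmq,
      padicValRat_two_odd hNodd, padicValRat_two_odd hkodd, padicValRat_two_odd hlodd, h2,
      padicValRat.of_int, padicValRat.of_int]
    rw [abs_lt]
    have := neg_le_abs (0 - (1 + (padicValInt 2 m : ℤ) + padicValInt 2 n + 0 + 0))
    constructor <;> omega

/-- A finite set of such `s` would contain one with maximal `|v₂(s)|`. -/
lemma doubledAbscissaRoots_eq_empty {u w : ℤ} (hu : Odd u) (hw : Odd w)
    (hfin : (doubledAbscissaRoots u w).Finite) : doubledAbscissaRoots u w = ∅ := by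
  by_contra hne
  obtain ⟨s, hs, hmax⟩ := Set.exists_max_image _ (fun s : ℚ => |padicValRat 2 s|) hfin
    (Set.nonempty_iff_ne_empty.mpr hne)
  obtain ⟨s', hs', hlt⟩ := exists_larger_val hu hw hs
  exact absurd (hmax s' hs') (not_le.mpr hlt)

lemma doubledAbscissaRoots_finite {p q : ℤ} (h1 : (EI1 p q).Finite) :
    (doubledAbscissaRoots (p ^ 2 - q ^ 2) (p ^ 2 + q ^ 2)).Finite := by
  -- `s` satisfies `s² = x - u⁴` for the abscissa `x` of a point of EI1, and each such
  -- equation has finitely many solutions.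
  have hX := h1.image (fun P : ℚ × ℚ => P.1 - ((p : ℚ) ^ 2 - (q : ℚ) ^ 2) ^ 4)
  have hbad : {s : ℚ | s ^ 2 ∈ (fun P : ℚ × ℚ => P.1 - ((p : ℚ) ^ 2 - (q : ℚ) ^ 2) ^ 4) ''
      EI1 p q}.Finite := by
    refine Set.Finite.preimage' hX fun x _ => ?_
    by_cases hx : ∃ r : ℚ, r ^ 2 = x
    · obtain ⟨r, rfl⟩ := hx
      refine (Set.toFinite {r, -r}).subset fun s hs => ?_
      exact sq_eq_sq_iff_eq_or_eq_neg.mp hs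
    · refine Set.finite_empty.subset fun s hs => hx ⟨s, hs⟩
  refine hbad.subset ?_
  rintro s ⟨-, ⟨r, hr⟩, ⟨t, ht⟩⟩
  push_cast at hr ht
  refine ⟨(s ^ 2 + ((p : ℚ) ^ 2 - (q : ℚ) ^ 2) ^ 4, s * r * t), ?_, by simp⟩
  change (s * r * t) ^ 2 = _
  have e : (s * r * t) ^ 2 = s ^ 2 * (r * r) * (t * t) := by ring
  rw [e, ← hr, ← ht]
  ring

/-- If both EI1 and EI2 have only finitely many rational points, then there is no I-BPC
(and, in the case `M = 1`, no perfect cuboid) whose Pythagorean internal rectangle has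
aspect ratio `(p²−q²) : 2pq`. -/
theorem no_IBPC_with_internal_ratio
    (p q : ℤ) (hq : 0 < q) (hqp : q < p) (hcop : IsCoprime p q) (hpar : p % 2 ≠ q % 2)
    (h1 : (EI1 p q).Finite) (h2 : (EI2 p q).Finite) :
    ¬ ∃ (α φ b c M : ℤ), 0 < α ∧ 0 < φ ∧ 0 < b ∧ 0 < c ∧ 0 < M ∧ Squarefree M ∧
      α * (2 * p * q) = φ * (p ^ 2 - q ^ 2) ∧ IsSquare (α ^ 2 + φ ^ 2) ∧
      b ^ 2 + c ^ 2 = M * φ ^ 2 ∧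
      IsSquare (M * α ^ 2 + b ^ 2) ∧ IsSquare (M * α ^ 2 + c ^ 2) := by
  rintro ⟨α, φ, b, c, M, hα, hφ, hb, hc, hM, -, hratio, -, hbc, ⟨d, hd⟩, ⟨e, he⟩⟩
  have hu : Odd (p ^ 2 - q ^ 2) := by
    rcases Int.even_or_odd p with h | h <;> rcases Int.even_or_odd q with h' | h'
    · rw [Int.even_iff] at h h'; omega
    · exact (h.pow_of_ne_zero two_ne_zero).sub_odd h'.pow
    · exact h.pow.sub_even (h'.pow_of_ne_zero two_ne_zero)
    · rw [Int.odd_iff] at h h'; omega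
  have hw : Odd (p ^ 2 + q ^ 2) := by
    have : p ^ 2 + q ^ 2 = p ^ 2 - q ^ 2 + 2 * q ^ 2 := by ring
    rw [this]
    exact hu.add_even (even_two_mul _)
  have hempty := doubledAbscissaRoots_eq_empty hu hw (doubledAbscissaRoots_finite h1)
  have hp : 0 < p := hq.trans hqp
  have hupos : 0 < p ^ 2 - q ^ 2 := by nlinarith
  have hbq : (b : ℚ) ≠ 0 := by exact_mod_cast hb.ne'
  have hcq : (c : ℚ) ≠ 0 := by exact_mod_cast hc.ne'
  have hφq : (φ : ℚ) ≠ 0 := by exact_mod_cast hφ.ne'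
  have huq : ((p : ℚ) ^ 2 - q ^ 2) ≠ 0 := by exact_mod_cast hupos.ne'
  have hwq : ((p : ℚ) ^ 2 + q ^ 2) ≠ 0 := by
    have : (p : ℚ) ≠ 0 := by exact_mod_cast hp.ne'
    positivity
  have hr : (α : ℚ) * (2 * p * q) = φ * (p ^ 2 - q ^ 2) := by exact_mod_cast hratio
  have hbc' : (b : ℚ) ^ 2 + c ^ 2 = M * φ ^ 2 := by exact_mod_cast hbc
  have hd' : (M : ℚ) * α ^ 2 + b ^ 2 = d * d := by exact_mod_cast hd
  have he' : (M : ℚ) * α ^ 2 + c ^ 2 = e * e := by exact_mod_cast he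
  have hr2 : (α : ℚ) ^ 2 * (2 * p * q) ^ 2 = φ ^ 2 * (p ^ 2 - q ^ 2) ^ 2 := by
    linear_combination (α * (2 * p * q) + φ * ((p : ℚ) ^ 2 - q ^ 2)) * hr
  have hmem : ((p : ℚ) ^ 2 - q ^ 2) * (p ^ 2 + q ^ 2) * c / b ∈
      doubledAbscissaRoots (p ^ 2 - q ^ 2) (p ^ 2 + q ^ 2) := by
    refine ⟨by positivity, ⟨(p ^ 2 - q ^ 2) * (2 * p * q) * e / b, ?_⟩,
      ⟨(p ^ 2 + q ^ 2) * (2 * p * q) * d / b, ?_⟩⟩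
    · push_cast
      field_simp
      linear_combination (2 * (p : ℚ) * q) ^ 2 * he' - M * hr2
        + (p ^ 2 - q ^ 2) ^ 2 * hbc'
    · push_cast
      field_simp
      linear_combination (2 * (p : ℚ) * q) ^ 2 * hd' - M * hr2
        + (p ^ 2 - q ^ 2) ^ 2 * hbc'
  rw [hempty] at hmem
  exact hmem
end

section
/- Let (p,q) be admissible. If both the curve EI3: y² = x³ − 2(p⁴+q⁴)x² + (p⁴−q⁴)²x and the curve EI4: y² = x³ − ((p²+q²)²+4p²q²)x² + 4p²q²(p²+q²)²x have only finitely many rational points, then there do not exist positive integers a, b, c, d, g such that a²+b² = d², a²+b²+c² = g², b²+c² is a perfect square, and either d·2pq = c·(p²−q²) or c·2pq = d·(p²−q²). In particular no face cuboid has a Pythagorean internal rectangle with aspect ratio (p²−q²):2pq. -/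
/-! ### Squares up to sign and the equation `x⁴ - y⁴ = z²` -/

/-- A coprime factor of a square is a square up to sign. -/
lemma sq_of_coprime_mul {a b c : ℤ} (h : IsCoprime a b) (e : a * b = c ^ 2 ∨ a * b = -c ^ 2) :
    ∃ z, a = z ^ 2 ∨ a = -z ^ 2 := by
  rcases e with e | e
  · exact Int.sq_of_isCoprime h e
  · exact Int.sq_of_isCoprime (b := -b) (c := c) h.neg_right (by linarith)

lemma sq_of_mul_sq {m r z : ℤ} (hr : r ≠ 0) (e : m * r ^ 2 = z ^ 2 ∨ m * r ^ 2 = -z ^ 2) :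
    ∃ y, m = y ^ 2 ∨ m = -y ^ 2 := by
  have hd : r ^ 2 ∣ z ^ 2 := by
    rcases e with e | e
    · exact ⟨m, by linarith⟩
    · exact ⟨-m, by linarith⟩
  obtain ⟨y, rfl⟩ := (Int.pow_dvd_pow_iff two_ne_zero).1 hd
  have hr2 : r ^ 2 ≠ 0 := pow_ne_zero 2 hr
  refine ⟨y, ?_⟩
  rcases e with e | e
  · left; apply mul_right_cancel₀ hr2; linarith
  · right; apply mul_right_cancel₀ hr2; linarith

lemma sq_of_coprime_sub_sq {X Y n : ℤ} (h : IsCoprime X Y) (hp : (X + Y) % 2 = 1)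
    (e : X ^ 2 - Y ^ 2 = n ^ 2) : ∃ z, X + Y = z ^ 2 ∨ X + Y = -z ^ 2 := by
  have hc : IsCoprime (X + Y) (X - Y) := by
    have h2 : IsCoprime (X + Y) 2 := ⟨1, -((X + Y) / 2), by omega⟩
    obtain ⟨a, b, hab⟩ := h
    have h3 : IsCoprime (X + Y) Y := ⟨a, b - a, by linarith⟩
    have h4 : IsCoprime (X + Y) (2 * Y) := h2.mul_right h3
    obtain ⟨c, d, hcd⟩ := h4
    exact ⟨c + d, -d, by linarith⟩
  exact sq_of_coprime_mul hc (c := n) (Or.inl (by linarith))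

lemma isCoprime_of_prime {a b : ℤ} (h : ∀ l : ℤ, Prime l → l ∣ a → l ∣ b → False) :
    IsCoprime a b := by
  rw [Int.isCoprime_iff_gcd_eq_one]
  by_contra hg
  obtain ⟨l, hl, hd⟩ := Nat.exists_prime_and_dvd hg
  have hd' : (l : ℤ) ∣ (Int.gcd a b : ℤ) := by exact_mod_cast hd
  exact h l (Nat.prime_iff_prime_int.1 hl) (hd'.trans (Int.gcd_dvd_left ..))
    (hd'.trans (Int.gcd_dvd_right ..))

lemma pow_eq_of_pm_sq {a z : ℤ} (h : a = z ^ 2 ∨ a = -z ^ 2) : a ^ 2 = z ^ 4 := by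
  rcases h with rfl | rfl <;> ring

/-- Fermat: a difference of two fourth powers is a square only trivially. -/
lemma fermat_sub (N : ℕ) : ∀ x y z : ℤ, x.natAbs = N → y ≠ 0 → z ≠ 0 →
    x ^ 4 = y ^ 4 + z ^ 2 → False := by
  induction N using Nat.strong_induction_on with
  | _ N ih =>
  intro x y z hN hy hz e
  have hx : x ≠ 0 := by
    rintro rfl
    have : 0 < z ^ 2 := by positivity
    have : 0 ≤ y ^ 4 := by positivity
    linarith
  have hcop : IsCoprime x y := by
    apply isCoprime_of_prime
    rintro l hl ⟨x', rfl⟩ ⟨y', rfl⟩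
    have hd : (l ^ 2) ^ 2 ∣ z ^ 2 := ⟨x' ^ 4 - y' ^ 4, by linear_combination -e⟩
    obtain ⟨z', rfl⟩ := (Int.pow_dvd_pow_iff two_ne_zero).1 hd
    have hx' : x' ≠ 0 := right_ne_zero_of_mul hx
    refine ih x'.natAbs ?_ x' y' z' rfl (right_ne_zero_of_mul hy) (right_ne_zero_of_mul hz) ?_
    · rw [← hN, Int.natAbs_mul]
      have h1 := (Int.prime_iff_natAbs_prime.1 hl).two_le
      have h2 : 0 < x'.natAbs := Int.natAbs_pos.2 hx'
      nlinarith
    · apply mul_left_cancel₀ (pow_ne_zero 4 hl.ne_zero)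
      linear_combination e
  have hx2 : 0 < x ^ 2 := by positivity
  have hy2 : 0 < y ^ 2 := by positivity
  have hz2 : 0 < z ^ 2 := by positivity
  have hzy : IsCoprime z (y ^ 2) := by
    apply isCoprime_of_prime
    intro l hl h1 h2
    have h2 := hl.dvd_of_dvd_pow h2
    have : l ∣ x ^ 4 := by
      rw [e]; exact dvd_add (h2.trans (dvd_pow_self y (by norm_num)))
        (h1.trans (dvd_pow_self z (by norm_num)))
    exact hl.not_isUnit (hcop.isUnit_of_dvd' (hl.dvd_of_dvd_pow this) h2)
  rcases Int.emod_two_eq_zero_or_one z with hz0 | hz1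
  -- `z` even: the legs `y²`, `z` of the triple give `m⁴ - n⁴ = (xy)²` with `m < |x|`
  · have hy1 : (y ^ 2) % 2 = 1 := by
      rcases Int.emod_two_eq_zero_or_one (y ^ 2) with h | h
      · exact absurd (hzy.isUnit_of_dvd' (Int.dvd_of_emod_eq_zero hz0)
          (Int.dvd_of_emod_eq_zero h)) (by decide)
      · exact h
    have ht : PythagoreanTriple (y ^ 2) z (x ^ 2) := by
      unfold PythagoreanTriple; linear_combination -e
    obtain ⟨m, n, h1, h2, h3, -, -, hm⟩ := ht.coprime_classification'
      (Int.isCoprime_iff_gcd_eq_one.1 hzy.symm) hy1 hx2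
    have hn : n ≠ 0 := by rintro rfl; exact hz (by rw [h2]; ring)
    refine ih m.natAbs ?_ m n (x * y) rfl hn (mul_ne_zero hx hy) ?_
    · rw [← hN]
      apply Int.natAbs_lt_iff_sq_lt.2
      have : 0 < n ^ 2 := by positivity
      linarith
    · rw [mul_pow, h1, h3]; ring
  · have ht : PythagoreanTriple z (y ^ 2) (x ^ 2) := by
      unfold PythagoreanTriple; linear_combination -e
    obtain ⟨m, n, h1, h2, h3, hmn, hpar, -⟩ := ht.coprime_classification'
      (Int.isCoprime_iff_gcd_eq_one.1 hzy) hz1 hx2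
    -- one of `m`, `n` is twice a square and the other a square, so `x² = 4M⁴ + K⁴`
    have key : ∃ M K : ℤ, M ≠ 0 ∧ IsCoprime M K ∧ K % 2 = 1 ∧ x ^ 2 = 4 * M ^ 4 + K ^ 4 := by
      have aux : ∀ m n : ℤ, IsCoprime m n → y ^ 2 = 2 * m * n → x ^ 2 = m ^ 2 + n ^ 2 →
          m % 2 = 0 → n % 2 = 1 →
          ∃ M K : ℤ, M ≠ 0 ∧ IsCoprime M K ∧ K % 2 = 1 ∧ x ^ 2 = 4 * M ^ 4 + K ^ 4 := by
        intro m n hmn h2 h3 hm hn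
        obtain ⟨m', rfl⟩ := Int.dvd_of_emod_eq_zero hm
        have hd : (2 : ℤ) ^ 2 ∣ y ^ 2 := ⟨m' * n, by linarith⟩
        obtain ⟨y', rfl⟩ := (Int.pow_dvd_pow_iff two_ne_zero).1 hd
        have hc : IsCoprime m' n := hmn.of_mul_left_right
        have hp : m' * n = y' ^ 2 := by linarith
        obtain ⟨M, hM⟩ := sq_of_coprime_mul hc (Or.inl hp)
        obtain ⟨K, hK⟩ := sq_of_coprime_mul (a := n) (b := m') (c := y') hc.symm
          (Or.inl (by linarith))
        have hM4 := pow_eq_of_pm_sq hM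
        have hK4 := pow_eq_of_pm_sq hK
        refine ⟨M, K, ?_, ?_, ?_, by rw [h3, ← hM4, ← hK4]; ring⟩
        · rintro rfl
          have : m' = 0 := by simpa using hM
          subst this
          simp at h2
          exact hy (by simpa using h2)
        · have : IsCoprime (m' ^ 2) (n ^ 2) := hc.pow
          rw [hM4, hK4] at this
          exact (IsCoprime.pow_iff (by norm_num) (by norm_num)).1 this
        · rcases Int.emod_two_eq_zero_or_one K with h | h
          · obtain ⟨k, rfl⟩ := Int.dvd_of_emod_eq_zero h
            exfalso
            rcases hK with hK | hK <;> ring_nf at hK <;> omega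
          · exact h
      have hmn' : IsCoprime m n := Int.isCoprime_iff_gcd_eq_one.2 hmn
      rcases hpar with ⟨ha, hb⟩ | ⟨ha, hb⟩
      · exact aux m n hmn' h2 h3 ha hb
      · exact aux n m hmn'.symm (by linarith) (by linarith) hb ha
    obtain ⟨M, K, hM, hMK, hK, hx4⟩ := key
    have hK1 : (K ^ 2) % 2 = 1 := by
      rw [pow_two, Int.mul_emod, hK]; rfl
    have hc : IsCoprime (K ^ 2) (2 * M ^ 2) := by
      have : IsCoprime (K ^ 2) 2 := ⟨1, -((K ^ 2) / 2), by omega⟩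
      exact this.mul_right hMK.symm.pow
    have ht : PythagoreanTriple (K ^ 2) (2 * M ^ 2) |x| := by
      unfold PythagoreanTriple; rw [abs_mul_abs_self]; linear_combination -hx4
    obtain ⟨r, s, k1, k2, k3, hrs, -, -⟩ := ht.coprime_classification'
      (Int.isCoprime_iff_gcd_eq_one.1 hc) hK1 (abs_pos.2 hx)
    have hrs' : IsCoprime r s := Int.isCoprime_iff_gcd_eq_one.2 hrs
    have hp : r * s = M ^ 2 := by linarith
    obtain ⟨R, hR⟩ := sq_of_coprime_mul hrs' (Or.inl hp)
    obtain ⟨S, hS⟩ := sq_of_coprime_mul (a := s) (b := r) (c := M) hrs'.symm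
      (Or.inl (by linarith))
    have hR4 := pow_eq_of_pm_sq hR
    have hS4 := pow_eq_of_pm_sq hS
    have hS0 : S ≠ 0 := by
      rintro rfl
      have : s = 0 := by simpa using hS
      subst this
      exact hM (by simpa using hp.symm)
    have hK0 : K ≠ 0 := by rintro rfl; simp at hK
    refine ih R.natAbs ?_ R S K rfl hS0 hK0 (by linarith)
    have h4 : 0 < S ^ 4 := by positivity
    have h5 : R ^ 2 ≤ R ^ 4 := by
      have := Int.le_self_sq (R ^ 2)
      rwa [← pow_mul] at this
    have h6 : |R| ≤ R ^ 2 := by rw [← sq_abs]; exact Int.le_self_sq _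
    have : |R| < |x| := by linarith
    rw [Int.abs_eq_natAbs, Int.abs_eq_natAbs] at this
    omega

/-! ### Duplication and its denominators -/

/-- `s/w`, `t/w`, `u/w` are nonzero, in lowest terms, with `(s/w)² - (t/w)² = D²` and
`(t/w)² - (u/w)² = C²`. For `G² = C² + D²` this says that `x = (s/w)²` is the abscissa of a point
of `y² = x(x - D²)(x - G²)`, not of order two, at which all three factors are squares. -/
structure Quad (D C s t u w : ℤ) : Prop where
  w_pos : 0 < w
  s_ne : s ≠ 0
  t_ne : t ≠ 0
  u_ne : u ≠ 0
  cop : IsCoprime s w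
  eq1 : s ^ 2 - t ^ 2 = D ^ 2 * w ^ 2
  eq2 : t ^ 2 - u ^ 2 = C ^ 2 * w ^ 2

lemma Quad.cop_t {D C s t u w : ℤ} (h : Quad D C s t u w) : IsCoprime t w := by
  have h1 : IsCoprime (s ^ 2) w := h.cop.pow_left
  have h2 : IsCoprime (t ^ 2) w := by
    obtain ⟨a, b, hab⟩ := h1
    exact ⟨a, b + a * D ^ 2 * w, by linear_combination hab - a * h.eq1⟩
  exact (IsCoprime.pow_left_iff (by norm_num)).1 h2

lemma Quad.cop_u {D C s t u w : ℤ} (h : Quad D C s t u w) : IsCoprime u w := by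
  have h1 : IsCoprime (t ^ 2) w := h.cop_t.pow_left
  have h2 : IsCoprime (u ^ 2) w := by
    obtain ⟨a, b, hab⟩ := h1
    exact ⟨a, b + a * C ^ 2 * w, by linear_combination hab - a * h.eq2⟩
  exact (IsCoprime.pow_left_iff (by norm_num)).1 h2

lemma rat_int_of_sq {r : ℚ} {n : ℤ} (h : r ^ 2 = n) : ∃ m : ℤ, r = m := by
  have h1 : (r ^ 2).den = 1 := by rw [h]; rfl
  rw [Rat.den_pow] at h1
  have h2 : r.den = 1 := by simpa using h1
  exact ⟨r.num, (Rat.coe_int_num_of_den_eq_one h2).symm⟩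

lemma no_sq_GC {D C G : ℤ} (hD : D ≠ 0) (hC : C ≠ 0) (hG : D ^ 2 + C ^ 2 = G ^ 2)
    (hcop : IsCoprime D C) {v : ℚ} (h : v ^ 2 = G * C ∨ v ^ 2 = -(G * C)) : False := by
  have hGC : IsCoprime G C := by
    have h1 : IsCoprime (D ^ 2) C := hcop.pow_left
    have h2 : IsCoprime (G ^ 2) C := by
      obtain ⟨a, b, hab⟩ := h1
      exact ⟨a, b - a * C, by linear_combination hab - a * hG⟩
    exact (IsCoprime.pow_left_iff (by norm_num)).1 h2
  obtain ⟨m, rfl⟩ : ∃ m : ℤ, v = m := by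
    rcases h with h | h
    · exact rat_int_of_sq (n := G * C) (by push_cast; exact h)
    · exact rat_int_of_sq (n := -(G * C)) (by push_cast; exact h)
  have h' : G * C = m ^ 2 ∨ G * C = -m ^ 2 := by
    rcases h with h | h
    · left; exact_mod_cast h.symm
    · right
      have : m ^ 2 = -(G * C) := by exact_mod_cast h
      linarith
  obtain ⟨x, hx⟩ := sq_of_coprime_mul hGC h'
  obtain ⟨y, hy⟩ := sq_of_coprime_mul hGC.symm (c := m) (by rwa [mul_comm C G])
  refine fermat_sub _ x y D rfl ?_ hD ?_
  · rintro rfl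
    exact hC (by simpa using hy)
  · rw [← pow_eq_of_pm_sq hx, ← pow_eq_of_pm_sq hy]; linarith

/-- The output of the duplication formula. If `(s, t, u)` are the square roots of the three
factors at a point, then those at its double have pairwise sums `A = st/u`, `B = su/t`, `E = tu/s`.
The condition on `B * E` ensures, through `no_sq_GC`, that the double is not of order two. -/
lemma exists_quad {D C G : ℤ} (hD : D ≠ 0) (hC : C ≠ 0) (hG : D ^ 2 + C ^ 2 = G ^ 2)
    (hcop : IsCoprime D C) {A B E v : ℚ} (h1 : A * (B - E) = D ^ 2) (h2 : E * (A - B) = C ^ 2)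
    (h3 : B * E = v ^ 2 ∨ B * E = -v ^ 2) :
    ∃ s t u w : ℤ, Quad D C s t u w ∧ (s + t : ℚ) = A * w ∧ (s + u : ℚ) = B * w ∧
      (t + u : ℚ) = E * w := by
  obtain ⟨x, hx⟩ : ∃ x, x = (A + B - E) / 2 := ⟨_, rfl⟩
  obtain ⟨y, hy⟩ : ∃ y, y = (A - B + E) / 2 := ⟨_, rfl⟩
  obtain ⟨z, hz⟩ : ∃ z, z = (-A + B + E) / 2 := ⟨_, rfl⟩
  have e1 : x ^ 2 - y ^ 2 = D ^ 2 := by rw [hx, hy]; linarith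
  have e2 : y ^ 2 - z ^ 2 = C ^ 2 := by rw [hy, hz]; linarith
  have hDq : (0 : ℚ) < D ^ 2 := by positivity
  have hCq : (0 : ℚ) < C ^ 2 := by positivity
  have hGq : (D : ℚ) ^ 2 + C ^ 2 = G ^ 2 := by exact_mod_cast hG
  have hx0 : x ≠ 0 := by
    intro h; rw [h] at e1; nlinarith [sq_nonneg y]
  have hy0 : y ≠ 0 := by
    intro h; rw [h] at e2; nlinarith [sq_nonneg z]
  have hz0 : z ≠ 0 := by
    intro h
    have hBx : B = x := by linarith
    have hEy : E = y := by linarith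
    have hyC : y = C ∨ y = -C := sq_eq_sq_iff_eq_or_eq_neg.1 (by rw [h] at e2; linarith)
    have hxG : x = G ∨ x = -G := sq_eq_sq_iff_eq_or_eq_neg.1 (by rw [h] at e2; linarith)
    rw [hBx, hEy] at h3
    apply no_sq_GC hD hC hG hcop (v := v)
    rcases hyC with k1 | k1 <;> rcases hxG with k2 | k2 <;> rcases h3 with h3 | h3 <;>
      rw [k1, k2] at h3
    · left; linarith
    · right; linarith
    · right; linarith
    · left; linarith
    · right; linarith
    · left; linarith
    · left; linarith
    · right; linarith
  have hw : (0 : ℤ) < x.den := by exact_mod_cast x.den_pos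
  have hwq : (x.den : ℚ) ≠ 0 := by exact_mod_cast x.den_nz
  have hxs : x * x.den = x.num := Rat.mul_den_eq_num x
  obtain ⟨t, ht⟩ : ∃ t : ℤ, y * x.den = t :=
    rat_int_of_sq (n := x.num ^ 2 - D ^ 2 * x.den ^ 2) (by
      push_cast; rw [← hxs]; linear_combination (-(x.den : ℚ) ^ 2) * e1)
  obtain ⟨u, hu⟩ : ∃ u : ℤ, z * x.den = u :=
    rat_int_of_sq (n := t ^ 2 - C ^ 2 * x.den ^ 2) (by
      push_cast; rw [← ht]; linear_combination (-(x.den : ℚ) ^ 2) * e2)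
  refine ⟨x.num, t, u, x.den, ⟨hw, ?_, ?_, ?_, ?_, ?_, ?_⟩, ?_, ?_, ?_⟩
  · exact Rat.num_ne_zero.2 hx0
  · have := mul_ne_zero hy0 hwq
    rw [ht] at this; exact_mod_cast this
  · have := mul_ne_zero hz0 hwq
    rw [hu] at this; exact_mod_cast this
  · exact Rat.isCoprime_num_den x
  · have : ((x.num ^ 2 - t ^ 2 : ℤ) : ℚ) = ((D ^ 2 * (x.den : ℤ) ^ 2 : ℤ) : ℚ) := by
      push_cast; rw [← hxs, ← ht]; linear_combination ((x.den : ℚ) ^ 2) * e1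
    exact_mod_cast this
  · have : ((t ^ 2 - u ^ 2 : ℤ) : ℚ) = ((C ^ 2 * (x.den : ℤ) ^ 2 : ℤ) : ℚ) := by
      push_cast; rw [← hu, ← ht]; linear_combination ((x.den : ℚ) ^ 2) * e2
    exact_mod_cast this
  · push_cast; rw [← hxs, ← ht, hx, hy]; ring
  · push_cast; rw [← hxs, ← hu, hx, hz]; ring
  · push_cast; rw [← ht, ← hu, hy, hz]; ring

/-- Duplication: the denominator `w` of the double is a multiple of the original one, and a proper
multiple if the latter is even. -/
lemma Quad.double {D C G s t u w : ℤ} (hD : D ≠ 0) (hC : C ≠ 0) (hG : D ^ 2 + C ^ 2 = G ^ 2)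
    (hcop : IsCoprime D C) (h : Quad D C s t u w) :
    ∃ s' t' u' w' : ℤ, Quad D C s' t' u' w' ∧ u * w * (s' + t') = w' * (s * t) ∧
      t * w * (s' + u') = w' * (s * u) ∧ s * w * (t' + u') = w' * (t * u) ∧
      w ∣ w' ∧ (2 ∣ w → 2 * w ∣ w') := by
  have hs : (s : ℚ) ≠ 0 := by exact_mod_cast h.s_ne
  have ht : (t : ℚ) ≠ 0 := by exact_mod_cast h.t_ne
  have hu : (u : ℚ) ≠ 0 := by exact_mod_cast h.u_ne
  have hw : (w : ℚ) ≠ 0 := by exact_mod_cast h.w_pos.ne'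
  have q1 : (s : ℚ) ^ 2 - t ^ 2 = D ^ 2 * w ^ 2 := by exact_mod_cast h.eq1
  have q2 : (t : ℚ) ^ 2 - u ^ 2 = C ^ 2 * w ^ 2 := by exact_mod_cast h.eq2
  obtain ⟨s', t', u', w', h', e1, e2, e3⟩ := exists_quad hD hC hG hcop
    (A := s * t / (u * w)) (B := s * u / (t * w)) (E := t * u / (s * w)) (v := u / w)
    (by field_simp; linarith) (by field_simp; linarith) (by left; field_simp)
  have k1 : u * w * (s' + t') = w' * (s * t) := by
    have : (u * w * (s' + t') : ℚ) = w' * (s * t) := by rw [e1]; field_simp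
    exact_mod_cast this
  have k2 : t * w * (s' + u') = w' * (s * u) := by
    have : (t * w * (s' + u') : ℚ) = w' * (s * u) := by rw [e2]; field_simp
    exact_mod_cast this
  have k3 : s * w * (t' + u') = w' * (t * u) := by
    have : (s * w * (t' + u') : ℚ) = w' * (t * u) := by rw [e3]; field_simp
    exact_mod_cast this
  have hst : IsCoprime w (s * t) := (h.cop.mul_left h.cop_t).symm
  have hd : w ∣ w' := hst.dvd_of_dvd_mul_right ⟨u * (s' + t'), by linarith⟩
  refine ⟨s', t', u', w', h', k1, k2, k3, hd, fun h2 => ?_⟩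
  have hst2 : IsCoprime 2 (s * t) := hst.of_isCoprime_of_dvd_left h2
  have hodd : ∀ r, IsCoprime r w' → r % 2 = 1 := by
    intro r hr
    rcases Int.emod_two_eq_zero_or_one r with h | h
    · exact absurd (hr.isUnit_of_dvd' (Int.dvd_of_emod_eq_zero h) (h2.trans hd)) (by decide)
    · exact h
  have a1 := hodd s' h'.cop
  have a2 := hodd t' h'.cop_t
  obtain ⟨r, hr⟩ : (2 : ℤ) ∣ s' + t' := by omega
  exact (hst2.mul_left hst).dvd_of_dvd_mul_right ⟨u * r, by rw [← k1, hr]; ring⟩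

/-- If the denominator does not grow under duplication, the pairwise sums at the double are coprime
and hence squares up to sign. -/
lemma Quad.sums {D C s t u s' t' u' w : ℤ}
    (hcop : IsCoprime D C) (h : Quad D C s t u w) (h' : Quad D C s' t' u' w)
    (k1 : u * w * (s' + t') = w * (s * t)) (k2 : t * w * (s' + u') = w * (s * u))
    (k3 : s * w * (t' + u') = w * (t * u)) :
    ∃ α β γ : ℤ, IsCoprime α β ∧ IsCoprime α γ ∧ IsCoprime β γ ∧
      (s' + t' = α ^ 2 ∨ s' + t' = -α ^ 2) ∧ (s' + u' = β ^ 2 ∨ s' + u' = -β ^ 2) ∧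
      (t' + u' = γ ^ 2 ∨ t' + u' = -γ ^ 2) ∧
      s ^ 2 = (α * β) ^ 2 ∧ t ^ 2 = (α * γ) ^ 2 ∧ u ^ 2 = (β * γ) ^ 2 := by
  have hw := h.w_pos.ne'
  have c1 : u * (s' + t') = s * t := mul_left_cancel₀ hw (by linarith)
  have c2 : t * (s' + u') = s * u := mul_left_cancel₀ hw (by linarith)
  have c3 : s * (t' + u') = t * u := mul_left_cancel₀ hw (by linarith)
  have d1 : (s' + t') * (s' + u') = s ^ 2 := by
    apply mul_left_cancel₀ (mul_ne_zero h.u_ne h.t_ne)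
    linear_combination t * (s' + u') * c1 + s * t * c2
  have d2 : (s' + t') * (t' + u') = t ^ 2 := by
    apply mul_left_cancel₀ (mul_ne_zero h.u_ne h.s_ne)
    linear_combination s * (t' + u') * c1 + s * t * c3
  have d3 : (s' + u') * (t' + u') = u ^ 2 := by
    apply mul_left_cancel₀ (mul_ne_zero h.t_ne h.s_ne)
    linear_combination s * (t' + u') * c2 + s * u * c3
  -- a common prime of two sums divides `D w` and `C w`, while it divides one of `s`, `t`, `u`
  have main : ∀ X Y r l : ℤ, X * Y = r ^ 2 → IsCoprime r w → Prime l → l ∣ X → l ∣ Y →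
      l ∣ s' ^ 2 - t' ^ 2 → l ∣ t' ^ 2 - u' ^ 2 → False := by
    intro X Y r l hr hrw hl hX _ m1 m2
    have hlr : l ∣ r := hl.dvd_of_dvd_pow (hr ▸ hX.mul_right Y)
    have hlw : ¬ l ∣ w := fun hh => hl.not_isUnit (hrw.isUnit_of_dvd' hlr hh)
    have aux : ∀ F : ℤ, l ∣ F ^ 2 * w ^ 2 → l ∣ F := by
      intro F hF
      rcases hl.dvd_or_dvd hF with hF | hF
      · exact hl.dvd_of_dvd_pow hF
      · exact absurd (hl.dvd_of_dvd_pow hF) hlw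
    rw [h'.eq1] at m1
    rw [h'.eq2] at m2
    exact hl.not_isUnit (hcop.isUnit_of_dvd' (aux _ m1) (aux _ m2))
  have i1 : IsCoprime (s' + t') (s' + u') := isCoprime_of_prime fun l hl ⟨x, hx⟩ ⟨y, hy⟩ =>
    main _ _ s l d1 h.cop hl ⟨x, hx⟩ ⟨y, hy⟩ ⟨x * (s' - t'), by linear_combination (s' - t') * hx⟩
      ⟨(x - y) * (t' + u'), by linear_combination (t' + u') * (hx - hy)⟩
  have i2 : IsCoprime (s' + t') (t' + u') := isCoprime_of_prime fun l hl ⟨x, hx⟩ ⟨y, hy⟩ =>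
    main _ _ t l d2 h.cop_t hl ⟨x, hx⟩ ⟨y, hy⟩ ⟨x * (s' - t'), by linear_combination (s' - t') * hx⟩
      ⟨y * (t' - u'), by linear_combination (t' - u') * hy⟩
  have i3 : IsCoprime (s' + u') (t' + u') := isCoprime_of_prime fun l hl ⟨x, hx⟩ ⟨y, hy⟩ =>
    main _ _ u l d3 h.cop_u hl ⟨x, hx⟩ ⟨y, hy⟩
      ⟨(x - y) * (s' + t'), by linear_combination (s' + t') * (hx - hy)⟩
      ⟨y * (t' - u'), by linear_combination (t' - u') * hy⟩
  obtain ⟨α, hα⟩ := sq_of_coprime_mul i1 (Or.inl d1)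
  obtain ⟨β, hβ⟩ := sq_of_coprime_mul i3 (Or.inl d3)
  obtain ⟨γ, hγ⟩ := sq_of_coprime_mul (c := u) i3.symm (Or.inl (by linarith))
  have cc : ∀ {a b x y : ℤ}, IsCoprime a b → (a = x ^ 2 ∨ a = -x ^ 2) →
      (b = y ^ 2 ∨ b = -y ^ 2) → IsCoprime x y := by
    intro a b x y hab ha hb
    have : IsCoprime (a ^ 2) (b ^ 2) := hab.pow
    rw [pow_eq_of_pm_sq ha, pow_eq_of_pm_sq hb] at this
    exact (IsCoprime.pow_iff (by norm_num) (by norm_num)).1 this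
  have pp : ∀ {a b x y r : ℤ}, a * b = r ^ 2 → (a = x ^ 2 ∨ a = -x ^ 2) →
      (b = y ^ 2 ∨ b = -y ^ 2) → r ^ 2 = (x * y) ^ 2 := by
    intro a b x y r hr ha hb
    have h4 : (r ^ 2) ^ 2 = ((x * y) ^ 2) ^ 2 := by
      rw [← hr, mul_pow, pow_eq_of_pm_sq ha, pow_eq_of_pm_sq hb]; ring
    exact (sq_eq_sq₀ (sq_nonneg r) (sq_nonneg (x * y))).1 h4
  exact ⟨α, β, γ, cc i1 hα hβ, cc i2 hα hγ, cc i3 hβ hγ, hα, hβ, hγ,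
    pp d1 hα hβ, pp d2 hα hγ, pp d3 hβ hγ⟩

/-- If `α²(X² - Y²)` is a nonzero square, with `X`, `Y` coprime of opposite parity, and
`α(X + Y)` is a square up to sign, then so is `α`. -/
lemma sq_factor {α X Y n z : ℤ} (h0 : n ≠ 0) (hXY : IsCoprime X Y) (hp : (X + Y) % 2 = 1)
    (e : α ^ 2 * (X ^ 2 - Y ^ 2) = n ^ 2)
    (hz : α * (X + Y) = z ^ 2 ∨ α * (X + Y) = -z ^ 2) : ∃ y, α = y ^ 2 ∨ α = -y ^ 2 := by
  obtain ⟨m, rfl⟩ := (Int.pow_dvd_pow_iff two_ne_zero).1 (⟨_, e.symm⟩ : α ^ 2 ∣ n ^ 2)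
  have hα : α ≠ 0 := left_ne_zero_of_mul h0
  have e' : X ^ 2 - Y ^ 2 = m ^ 2 := mul_left_cancel₀ (pow_ne_zero 2 hα) (by linarith)
  obtain ⟨r, hr⟩ := sq_of_coprime_sub_sq hXY hp e'
  have hr0 : r ≠ 0 := by
    rintro rfl
    have : X + Y = 0 := by simpa using hr
    omega
  apply sq_of_mul_sq hr0 (z := z)
  rcases hr with hr | hr <;> rw [hr] at hz <;> rcases hz with hz | hz
  · left; linarith
  · right; linarith
  · right; linarith
  · left; linarith

/-- Three points, each the double of the previous one, cannot share one odd denominator. -/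
lemma no_quad_chain {D C G s₀ t₀ u₀ s t u s' t' u' w : ℤ} (hD : D ≠ 0) (hC : C ≠ 0)
    (hG0 : G ≠ 0) (hG : D ^ 2 + C ^ 2 = G ^ 2) (hcop : IsCoprime D C) (hw : w % 2 = 1)
    (hq₀ : Quad D C s₀ t₀ u₀ w) (hq : Quad D C s t u w) (hq' : Quad D C s' t' u' w)
    (j1 : u₀ * w * (s + t) = w * (s₀ * t₀)) (j2 : t₀ * w * (s + u) = w * (s₀ * u₀))
    (j3 : s₀ * w * (t + u) = w * (t₀ * u₀))
    (k1 : u * w * (s' + t') = w * (s * t)) (k2 : t * w * (s' + u') = w * (s * u))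
    (k3 : s * w * (t' + u') = w * (t * u)) : False := by
  obtain ⟨α, β, γ, cab, cag, cbg, hα, hβ, hγ, hs, ht, hu⟩ := hq.sums hcop hq' k1 k2 k3
  obtain ⟨α₁, β₁, γ₁, -, -, -, hα₁, hβ₁, hγ₁, -, -, -⟩ := hq₀.sums hcop hq j1 j2 j3
  have hw0 := hq.w_pos.ne'
  have odd2 : ∀ {r : ℤ}, r % 2 = 1 → r ^ 2 % 4 = 1 := by
    intro r hr
    obtain ⟨k, rfl⟩ : ∃ k, r = 2 * k + 1 := ⟨r / 2, by omega⟩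
    ring_nf; omega
  have even2 : ∀ {r : ℤ}, r % 2 = 0 → r ^ 2 % 4 = 0 := by
    intro r hr
    obtain ⟨k, rfl⟩ : ∃ k, r = 2 * k := ⟨r / 2, by omega⟩
    ring_nf; omega
  have E1 := hq.eq1
  have E2 := hq.eq2
  rw [← mul_pow] at E1 E2
  have parw : ∀ F : ℤ, (F * w) % 2 = F % 2 := by
    intro F; rw [Int.mul_emod, hw]; omega
  have parity : ∀ a b : ℤ, (a * b) % 2 = (a % 2) * (b % 2) := by
    intro a b
    rcases Int.emod_two_eq_zero_or_one a with h | h <;>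
    rcases Int.emod_two_eq_zero_or_one b with hb | hb <;> simp [Int.mul_emod, h, hb]
  -- `±α² ± β² ± γ² = 2(s' + t' + u')` is even
  have hsum : (α % 2 = 0 ∨ β % 2 = 0 ∨ γ % 2 = 0) := by
    by_contra hcon
    push Not at hcon
    have a1 := odd2 (r := α) (by omega)
    have a2 := odd2 (r := β) (by omega)
    have a3 := odd2 (r := γ) (by omega)
    omega
  have nev : ∀ {a b : ℤ}, IsCoprime a b → ¬ (a % 2 = 0 ∧ b % 2 = 0) := by
    rintro a b hab ⟨h1, h2⟩
    exact absurd (hab.isUnit_of_dvd' (Int.dvd_of_emod_eq_zero h1)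
      (Int.dvd_of_emod_eq_zero h2)) (by decide)
  have n1 := nev cab
  have n2 := nev cag
  have n3 := nev cbg
  have n4 := nev hcop
  have sqpar : ∀ r : ℤ, (r % 2 = 0 ∧ r ^ 2 % 4 = 0) ∨ (r % 2 = 1 ∧ r ^ 2 % 4 = 1) := by
    intro r
    rcases Int.emod_two_eq_zero_or_one r with h | h
    · exact Or.inl ⟨h, even2 h⟩
    · exact Or.inr ⟨h, odd2 h⟩
  have hγ2 : γ % 2 = 0 := by
    by_contra hγ2
    have hγ2 : γ % 2 = 1 := by omega
    have p1 := sqpar (D * w)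
    have p2 := sqpar (C * w)
    have pα := Int.emod_two_eq_zero_or_one α
    have pβ := Int.emod_two_eq_zero_or_one β
    have p3 := sqpar (α * β)
    have p4 := sqpar (α * γ)
    have p5 := sqpar (β * γ)
    rw [parw] at p1 p2
    rw [parity, hγ2] at p4 p5
    rw [parity] at p3
    rcases pα with pα | pα <;> rcases pβ with pβ | pβ <;> rw [pα] at p3 p4 <;>
      rw [pβ] at p3 p5 <;> omega
  have hα2 : α % 2 = 1 := by omega
  have hβ2 : β % 2 = 1 := by omega
  -- normalise signs so that `s = αβ`, `t = αγ`, `u = ±βγ`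
  obtain ⟨β', hβ', hs'⟩ : ∃ β', (β' = β ∨ β' = -β) ∧ s = α * β' := by
    rcases sq_eq_sq_iff_eq_or_eq_neg.1 hs with h | h
    · exact ⟨β, Or.inl rfl, h⟩
    · exact ⟨-β, Or.inr rfl, by rw [h]; ring⟩
  obtain ⟨γ', hγ', ht'⟩ : ∃ γ', (γ' = γ ∨ γ' = -γ) ∧ t = α * γ' := by
    rcases sq_eq_sq_iff_eq_or_eq_neg.1 ht with h | h
    · exact ⟨γ, Or.inl rfl, h⟩
    · exact ⟨-γ, Or.inr rfl, by rw [h]; ring⟩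
  obtain ⟨δ, hδ, hu'⟩ : ∃ δ, (δ = γ ∨ δ = -γ) ∧ u = β' * δ := by
    rcases sq_eq_sq_iff_eq_or_eq_neg.1 hu with h | h <;> rcases hβ' with k | k
    · exact ⟨γ, Or.inl rfl, by rw [h, k]⟩
    · exact ⟨-γ, Or.inr rfl, by rw [h, k]; ring⟩
    · exact ⟨-γ, Or.inr rfl, by rw [h, k]; ring⟩
    · exact ⟨γ, Or.inl rfl, by rw [h, k]; ring⟩
  have cb : IsCoprime β' γ' := by
    rcases hβ' with rfl | rfl <;> rcases hγ' with rfl | rfl <;>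
      simpa [IsCoprime.neg_left_iff, IsCoprime.neg_right_iff] using cbg
  have ca : IsCoprime α δ := by
    rcases hδ with rfl | rfl <;> simpa [IsCoprime.neg_right_iff] using cag
  have hγδ : γ' ^ 2 = δ ^ 2 := by
    rcases hδ with rfl | rfl <;> rcases hγ' with rfl | rfl <;> ring
  obtain ⟨a, ha⟩ : ∃ a, α = a ^ 2 ∨ α = -a ^ 2 := by
    refine sq_factor (X := β') (Y := γ') (n := D * w) (z := α₁) (mul_ne_zero hD hw0) cb
      (by omega) ?_ ?_
    · rw [← E1, hs', ht']; ring
    · rw [mul_add, ← hs', ← ht']; exact hα₁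
  obtain ⟨b, hb⟩ : ∃ b, β' = b ^ 2 ∨ β' = -b ^ 2 := by
    refine sq_factor (X := α) (Y := δ) (n := G * w) (z := β₁) (mul_ne_zero hG0 hw0) ca
      (by omega) ?_ ?_
    · rw [mul_pow G, ← hG]
      have h1 := hq.eq1
      have h2 := hq.eq2
      rw [hs', ht'] at h1
      rw [ht', hu'] at h2
      linarith
    · rw [mul_add, mul_comm β' α, ← hs', ← hu']; exact hβ₁
  have e2 : δ ^ 2 * (α ^ 2 - β' ^ 2) = (C * w) ^ 2 := by
    rw [← E2, ht', hu', mul_pow α, hγδ]; ring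
  obtain ⟨m, hm⟩ := (Int.pow_dvd_pow_iff two_ne_zero).1 (⟨_, e2.symm⟩ : δ ^ 2 ∣ (C * w) ^ 2)
  have hCw : δ * m ≠ 0 := hm ▸ mul_ne_zero hC hw0
  have hδ0 := left_ne_zero_of_mul hCw
  have e3 : α ^ 2 - β' ^ 2 = m ^ 2 := by
    rw [hm] at e2
    exact mul_left_cancel₀ (pow_ne_zero 2 hδ0) (by linarith)
  refine fermat_sub _ a b m rfl ?_ (right_ne_zero_of_mul hCw) ?_
  · rintro rfl
    have : β' = 0 := by simpa using hb
    omega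
  · rw [← pow_eq_of_pm_sq ha, ← pow_eq_of_pm_sq hb]; linarith

/-! ### Conclusion -/

/-- The common form of both curves: if `y² = x(x - D²)(x - G²)` has finitely many rational points,
no point on it has `x = a²`, `x - D² = -b²`, `x - G² = -e²` with `abe ≠ 0`. -/
lemma no_cuboid {D C G : ℤ} (hD : D ≠ 0) (hC : C ≠ 0) (hG0 : G ≠ 0)
    (hG : D ^ 2 + C ^ 2 = G ^ 2) (hcop : IsCoprime D C)
    (hfin : {P : ℚ × ℚ | P.2 ^ 2 = P.1 * (P.1 - D ^ 2) * (P.1 - G ^ 2)}.Finite)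
    {a b e : ℚ} (ha : a ≠ 0) (hb : b ≠ 0) (he : e ≠ 0) (h1 : a ^ 2 + b ^ 2 = D ^ 2)
    (h2 : b ^ 2 + C ^ 2 = e ^ 2) : False := by
  -- the double of the given point
  obtain ⟨s₁, t₁, u₁, w₁, hq₁, -, -, -⟩ := exists_quad hD hC hG hcop
    (A := a * b / e) (B := a * e / b) (E := -(b * e / a)) (v := e)
    (by field_simp; linarith) (by field_simp; linarith) (by right; field_simp)
  obtain ⟨N, hN⟩ := (hfin.image fun P => P.1.den).bddAbove
  have hbound : ∀ w : ℤ, (∃ s t u, Quad D C s t u w) → w ≤ N := by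
    rintro w ⟨s, t, u, hq⟩
    have hw : (w : ℚ) ≠ 0 := by exact_mod_cast hq.w_pos.ne'
    have q1 : (s : ℚ) ^ 2 - t ^ 2 = D ^ 2 * w ^ 2 := by exact_mod_cast hq.eq1
    have q2 : (t : ℚ) ^ 2 - u ^ 2 = C ^ 2 * w ^ 2 := by exact_mod_cast hq.eq2
    have hGq : (D : ℚ) ^ 2 + C ^ 2 = G ^ 2 := by exact_mod_cast hG
    have hmem : (((s : ℚ) / w) ^ 2, (s / w * (t / w) * (u / w) : ℚ)) ∈
        {P : ℚ × ℚ | P.2 ^ 2 = P.1 * (P.1 - D ^ 2) * (P.1 - G ^ 2)} := by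
      have r1 : ((s : ℚ) / w) ^ 2 - D ^ 2 = (t / w) ^ 2 := by field_simp; linarith
      have r2 : ((s : ℚ) / w) ^ 2 - G ^ 2 = (u / w) ^ 2 := by
        rw [← hGq]; field_simp; linarith
      simp only [Set.mem_ofPred_eq, r1, r2]; ring
    have := hN (Set.mem_image_of_mem _ hmem)
    simp only [Rat.den_pow] at this
    have hden : (((s : ℚ) / w).den : ℤ) = w :=
      Rat.den_div_eq_of_coprime hq.w_pos (Int.isCoprime_iff_nat_coprime.1 hq.cop)
    have h3 : ((s : ℚ) / w).den ≤ N := (Nat.le_self_pow two_ne_zero _).trans this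
    rw [← hden]; exact_mod_cast h3
  obtain ⟨w, ⟨s, t, u, hq⟩, hmax⟩ := Int.exists_greatest_of_bdd ⟨N, hbound⟩
    ⟨w₁, s₁, t₁, u₁, hq₁⟩
  obtain ⟨s', t', u', w', hq', j1, j2, j3, hd, hd2⟩ := hq.double hD hC hG hcop
  have hw' : w' = w := le_antisymm (hmax _ ⟨_, _, _, hq'⟩) (Int.le_of_dvd hq'.w_pos hd)
  subst hw'
  obtain ⟨s'', t'', u'', w'', hq'', k1, k2, k3, hdd, -⟩ := hq'.double hD hC hG hcop
  have hw'' : w'' = w' := le_antisymm (hmax _ ⟨_, _, _, hq''⟩) (Int.le_of_dvd hq''.w_pos hdd)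
  subst hw''
  have hodd : w'' % 2 = 1 := by
    by_contra hcon
    have := Int.le_of_dvd hq.w_pos (hd2 (by omega))
    have := hq.w_pos
    omega
  exact no_quad_chain hD hC hG0 hG hcop hodd hq hq' hq'' j1 j2 j3 k1 k2 k3

lemma no_cuboid_int {D C G : ℤ} (hD : D ≠ 0) (hC : C ≠ 0) (hG0 : G ≠ 0)
    (hG : D ^ 2 + C ^ 2 = G ^ 2) (hcop : IsCoprime D C)
    (hfin : {P : ℚ × ℚ | P.2 ^ 2 = P.1 * (P.1 - D ^ 2) * (P.1 - G ^ 2)}.Finite)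
    {a b c d : ℤ} (ha : 0 < a) (hb : 0 < b) (hd : 0 < d) (h1 : a ^ 2 + b ^ 2 = d ^ 2)
    (h2 : IsSquare (b ^ 2 + c ^ 2)) (h3 : d * C = c * D) : False := by
  obtain ⟨e, he⟩ := h2
  have he0 : e ≠ 0 := by rintro rfl; nlinarith [sq_nonneg c]
  have hDq : (D : ℚ) ≠ 0 := by exact_mod_cast hD
  have haq : (a : ℚ) ≠ 0 := by exact_mod_cast ha.ne'
  have hbq : (b : ℚ) ≠ 0 := by exact_mod_cast hb.ne'
  have hdq : (d : ℚ) ≠ 0 := by exact_mod_cast hd.ne'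
  have heq : (e : ℚ) ≠ 0 := by exact_mod_cast he0
  have q1 : (a : ℚ) ^ 2 + b ^ 2 = d ^ 2 := by exact_mod_cast h1
  have q2 : (b : ℚ) ^ 2 + c ^ 2 = e * e := by exact_mod_cast he
  have q3 : (d : ℚ) * C = c * D := by exact_mod_cast h3
  have hCq : (C : ℚ) = c * D / d := by field_simp; linarith
  refine no_cuboid hD hC hG0 hG hcop hfin (a := a * D / d) (b := b * D / d) (e := e * D / d)
    (by positivity) (by positivity) (by positivity) ?_ ?_
  · field_simp; linarith
  · rw [hCq]; field_simp; linarith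

lemma isCoprime_legs {p q : ℤ} (hcop : IsCoprime p q) (hpar : p % 2 ≠ q % 2) :
    IsCoprime (p ^ 2 - q ^ 2) (2 * p * q) := by
  have h2 : IsCoprime (p ^ 2 - q ^ 2) 2 := by
    obtain ⟨k, hk⟩ : ∃ k, p = q + 2 * k + 1 := ⟨(p - q - 1) / 2, by omega⟩
    exact ⟨1, -(q * (2 * k + 1) + 2 * k ^ 2 + 2 * k), by rw [hk]; ring⟩
  have hp : IsCoprime (p ^ 2 - q ^ 2) p := by
    obtain ⟨a, b, hab⟩ := (hcop.pow_right (n := 2) : IsCoprime p (q ^ 2))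
    exact ⟨-b, a + b * p, by linear_combination hab⟩
  have hq : IsCoprime (p ^ 2 - q ^ 2) q := by
    obtain ⟨a, b, hab⟩ := (hcop.pow_left (m := 2) : IsCoprime (p ^ 2) q)
    exact ⟨a, b + a * q, by linear_combination hab⟩
  exact (h2.mul_right hp).mul_right hq

/-- If both EI3 and EI4 have only finitely many rational points, then no face cuboid has
a Pythagorean internal rectangle with aspect ratio `(p²−q²) : 2pq`. -/
theorem no_face_cuboid_with_internal_ratio
    (p q : ℤ) (hq : 0 < q) (hqp : q < p) (hcop : IsCoprime p q) (hpar : p % 2 ≠ q % 2)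
    (h3 : (EI3 p q).Finite) (h4 : (EI4 p q).Finite) :
    ¬ ∃ a b c d g : ℤ, 0 < a ∧ 0 < b ∧ 0 < c ∧ 0 < d ∧ 0 < g ∧
      a ^ 2 + b ^ 2 = d ^ 2 ∧ a ^ 2 + b ^ 2 + c ^ 2 = g ^ 2 ∧ IsSquare (b ^ 2 + c ^ 2) ∧
      (d * (2 * p * q) = c * (p ^ 2 - q ^ 2) ∨ c * (2 * p * q) = d * (p ^ 2 - q ^ 2)) := by
  rintro ⟨a, b, c, d, g, ha, hb, -, hd, -, h1, -, h2, h⟩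
  have hD : p ^ 2 - q ^ 2 ≠ 0 := by nlinarith
  have hC : 2 * p * q ≠ 0 := mul_ne_zero (by linarith) hq.ne'
  have hG : p ^ 2 + q ^ 2 ≠ 0 := by positivity
  have hcop' := isCoprime_legs hcop hpar
  rcases h with h | h
  · refine no_cuboid_int hD hC hG (by ring) hcop' ?_ ha hb hd h1 h2 h
    convert h3 using 1
    ext ⟨x, y⟩
    simp only [EI3, Set.mem_ofPred_eq]
    push_cast
    constructor <;> intro hh <;> linear_combination hh
  · refine no_cuboid_int hC hD hG (by ring) hcop'.symm ?_ ha hb hd h1 h2 h.symm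
    convert h4 using 1
    ext ⟨x, y⟩
    simp only [EI4, Set.mem_ofPred_eq]
    push_cast
    constructor <;> intro hh <;> linear_combination hh
end

section
/- Theorem 5: For any admissible pair (p,q) satisfying either p⁴−q⁴ < 4p²q² or (p²+q²)(p−q)² > 4p²q², there exist positive integers a, b, E such that a²+b², a²+E, b²+E, and a²+b²+E are all perfect squares and 4p²q²·a² = (p²−q²)²·(b²+E); that is, there is a cuboid with two integer edges a, b, integer square E of the third edge, integer face diagonals and integer main diagonal, whose internal rectangle with sides a and √(b²+E) has aspect ratio (p²−q²):2pq (per the paper, an edge cuboid with an internal rectangle of that aspect ratio). -/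
/-!
Put `A = p² - q²`, `B = 2pq`, `C = p² + q²`, so `A² + B² = C²`. After scaling by `w`, a cuboid with
`a = A w` and `b² + E = (B w)²` is the same as an integer point on the curve
`s² = A² w² + b²`, `t² = C² w² - b²` with `0 < b < B w`.

This intersection of quadrics is an elliptic curve, uniformised by the Jacobi functions
`b / (C w) = sn u`, `t / (C w) = cn u`, `s / (A w) = dn u` with modulus `k² = -C² / A²`; the
addition theorem for `sn`, `cn`, `dn` is `OnCurve.add`. It carries the known point
`P = (B, C, A, 1)`, which only just fails the inequality `b < B w`.

Walk along the multiples `v = nP`. As long as `cn` stays positive it decreases by at least a fixed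
amount at each step, so at some stage `cn v > 0 > cn (v + P)`. Now
`sn ((v + P) ± v)` is `sn (v + P) cn v dn v ± sn v cn (v + P) dn (v + P)` over a common positive
denominator. Here the two products have opposite signs, so the sum is strictly smaller
in absolute value than the difference, which is `sn P = B / C` (`sub_identity`). Thus `2v + P` has
`|b| < B w`. Finally `b ≠ 0` there: `B` is even while `A`, `C` are odd, so along the walk `s`, `t`,
`w` stay odd and `b / B` changes parity at each step, whence exactly one of the two products is
an odd multiple of `B`.
-/

/-- The point `(b : s : t : w)` lies on the curve `s² = A² w² + b²`, `t² = C² w² - b²`. -/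
def OnCurve (A C b s t w : ℤ) : Prop :=
  s ^ 2 = A ^ 2 * w ^ 2 + b ^ 2 ∧ t ^ 2 = C ^ 2 * w ^ 2 - b ^ 2

/-- Addition theorem for the Jacobi functions, in homogeneous form. -/
theorem OnCurve.add {A C b₁ s₁ t₁ w₁ b₂ s₂ t₂ w₂ : ℤ}
    (h₁ : OnCurve A C b₁ s₁ t₁ w₁) (h₂ : OnCurve A C b₂ s₂ t₂ w₂) :
    OnCurve A C (A * C * (b₁ * w₁ * t₂ * s₂ + b₂ * w₂ * t₁ * s₁))
      (A * (C ^ 2 * s₁ * s₂ * w₁ * w₂ + b₁ * b₂ * t₁ * t₂))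
      (C * (A ^ 2 * t₁ * t₂ * w₁ * w₂ - b₁ * b₂ * s₁ * s₂))
      (A ^ 2 * C ^ 2 * w₁ ^ 2 * w₂ ^ 2 + b₁ ^ 2 * b₂ ^ 2) := by
  obtain ⟨hs₁, ht₁⟩ := h₁
  obtain ⟨hs₂, ht₂⟩ := h₂
  -- The mixed terms in `s₁ s₂ t₁ t₂` cancel, leaving polynomials in the squares.
  constructor
  · rw [← sub_eq_zero]
    calc _ = A ^ 2 * (C ^ 4 * s₁ ^ 2 * s₂ ^ 2 * w₁ ^ 2 * w₂ ^ 2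
              + b₁ ^ 2 * b₂ ^ 2 * t₁ ^ 2 * t₂ ^ 2)
            - A ^ 2 * (A ^ 2 * C ^ 2 * w₁ ^ 2 * w₂ ^ 2 + b₁ ^ 2 * b₂ ^ 2) ^ 2
            - A ^ 2 * C ^ 2 * (b₁ ^ 2 * w₁ ^ 2 * t₂ ^ 2 * s₂ ^ 2
              + b₂ ^ 2 * w₂ ^ 2 * t₁ ^ 2 * s₁ ^ 2) := by ring
      _ = 0 := by rw [hs₁, hs₂, ht₁, ht₂]; ring
  · rw [← sub_eq_zero]
    calc _ = C ^ 2 * (A ^ 4 * t₁ ^ 2 * t₂ ^ 2 * w₁ ^ 2 * w₂ ^ 2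
              + b₁ ^ 2 * b₂ ^ 2 * s₁ ^ 2 * s₂ ^ 2)
            - C ^ 2 * (A ^ 2 * C ^ 2 * w₁ ^ 2 * w₂ ^ 2 + b₁ ^ 2 * b₂ ^ 2) ^ 2
            + A ^ 2 * C ^ 2 * (b₁ ^ 2 * w₁ ^ 2 * t₂ ^ 2 * s₂ ^ 2
              + b₂ ^ 2 * w₂ ^ 2 * t₁ ^ 2 * s₁ ^ 2) := by ring
      _ = 0 := by rw [hs₁, hs₂, ht₁, ht₂]; ring

/-- The relation `sn ((v + P) - v) = sn P` with denominators cleared, for `v = (B β : s : t : w)`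
and `v + P = (B β' : s' : t' : w')`, where `P = (B : C : A : 1)`. -/
theorem sub_identity {A B C β s t w β' s' t' w' : ℤ} (hC : A ^ 2 + B ^ 2 = C ^ 2)
    (h : OnCurve A C (B * β) s t w)
    (hβ' : β' = A * C * (A * C * β * w + t * s))
    (hs' : s' = A * (C ^ 3 * s * w + B ^ 2 * β * A * t))
    (ht' : t' = C * (A ^ 3 * t * w - B ^ 2 * β * C * s))
    (hw' : w' = A ^ 2 * C ^ 2 * w ^ 2 + B ^ 4 * β ^ 2) :
    A * C * (β' * w' * t * s - β * w * t' * s') =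
      A ^ 2 * C ^ 2 * w ^ 2 * w' ^ 2 + B ^ 4 * β ^ 2 * β' ^ 2 := by
  obtain ⟨hs, ht⟩ := h
  rw [← sub_eq_zero]
  -- The odd part in `s t` cancels, leaving a polynomial in `s²` and `t²`.
  calc _ = A ^ 2 * C ^ 2 * w ^ 2 * (A ^ 2 * C ^ 2 * s ^ 2 * t ^ 2
          - B ^ 2 * β ^ 2 * (A ^ 4 * t ^ 2 - C ^ 4 * s ^ 2)
          - (A ^ 2 * C ^ 2 * w ^ 2 + B ^ 4 * β ^ 2) ^ 2 - A ^ 2 * C ^ 2 * B ^ 4 * β ^ 4) := by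
        subst hβ' hs' ht' hw'; ring
    _ = 0 := by
        rw [hs, ht]
        linear_combination (-(A ^ 2 * C ^ 2 * w ^ 2) * (2 * A ^ 2 * B ^ 2 * C ^ 2 * w ^ 2 * β ^ 2
          + B ^ 4 * β ^ 4 * (C ^ 2 - A ^ 2 + B ^ 2))) * hC

/-- The walk `v ↦ v + P`, by induction on a bound `N` for `C² t / w`, which drops by at least `1`
at each step as long as `t` stays positive. -/
theorem exists_small_point_aux {A B C : ℤ} (hA : 0 < A) (hB : 0 < B) (hC0 : 0 < C)
    (hC : A ^ 2 + B ^ 2 = C ^ 2) (hAo : Odd A) (hBe : Even B) (hCo : Odd C) (N : ℕ) :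
    ∀ β s t w : ℤ, OnCurve A C (B * β) s t w → 0 < β → 0 < s → 0 < t → 0 < w →
      Odd s → Odd t → Odd w → t ≤ A * w → C ^ 2 * t ≤ N * w →
      ∃ b s t w : ℤ, OnCurve A C b s t w ∧ b ≠ 0 ∧ |b| < B * w ∧ 0 < w := by
  induction N with
  | zero =>
    intro β s t w _ _ _ ht _ _ _ _ _ hN
    have : 0 < C ^ 2 * t := by positivity
    simp at hN
    omega
  | succ N ih =>
    intro β s t w h hβ hs ht hw hso hto hwo htA hN
    obtain ⟨β', hβ'⟩ : ∃ x, x = A * C * (A * C * β * w + t * s) := ⟨_, rfl⟩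
    obtain ⟨s', hs'⟩ : ∃ x, x = A * (C ^ 3 * s * w + B ^ 2 * β * A * t) := ⟨_, rfl⟩
    obtain ⟨t', ht'⟩ : ∃ x, x = C * (A ^ 3 * t * w - B ^ 2 * β * C * s) := ⟨_, rfl⟩
    obtain ⟨w', hw'⟩ : ∃ x, x = A ^ 2 * C ^ 2 * w ^ 2 + B ^ 4 * β ^ 2 := ⟨_, rfl⟩
    have hP : OnCurve A C B C A 1 := ⟨by linarith, by linarith⟩
    have h' : OnCurve A C (B * β') s' t' w' := by
      have := h.add hP
      convert this using 1 <;> subst hβ' hs' ht' hw' <;> ring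
    have hβ'0 : 0 < β' := by rw [hβ']; positivity
    have hs'0 : 0 < s' := by rw [hs']; positivity
    have hw'0 : 0 < w' := by rw [hw']; positivity
    have hs'o : Odd s' := by
      rw [hs']; simp [Int.odd_mul, Int.odd_add, hAo, hCo, hso, hwo, hBe, parity_simps]
    have ht'o : Odd t' := by
      rw [ht']; simp [Int.odd_mul, Int.odd_sub, hAo, hCo, hto, hwo, hBe, parity_simps]
    have hw'o : Odd w' := by
      rw [hw']; simp [Int.odd_add, hAo, hCo, hwo, hBe, parity_simps]
    have hβ'p : Odd β' ↔ Even β := by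
      have hts : Odd (t * s) := hto.mul hso
      have hACw : Odd (A * C * w) := (hAo.mul hCo).mul hwo
      have e : β' = A * C * (A * C * w * β + t * s) := by rw [hβ']; ring
      rw [e, Int.odd_mul, Int.odd_add', Int.even_mul]
      simp [hAo.mul hCo, hts, Int.not_even_iff_odd.2 hACw]
    have hAC : A ≤ C := by nlinarith
    rcases lt_or_ge 0 t' with ht'0 | ht'0
    · refine ih β' s' t' w' h' hβ'0 hs'0 ht'0 hw'0 hs'o ht'o hw'o ?_ ?_
      · have e1 : A ^ 3 * C * w * t ≤ A ^ 3 * C * w * (A * w) := by gcongr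
        have e3 : 0 < B ^ 2 * β * C ^ 2 * s := by positivity
        have e4 : 0 < A * (B ^ 4 * β ^ 2) := by positivity
        have e5 : A ^ 3 * w ^ 2 * C * A ≤ A ^ 3 * w ^ 2 * C * C := by gcongr
        rw [ht', hw']
        linarith
      · obtain ⟨hs2, ht2⟩ := h
        have hsA : A * w ≤ s := by
          refine (pow_le_pow_iff_left₀ (by positivity) hs.le two_ne_zero).1 ?_
          nlinarith [sq_nonneg (B * β)]
        -- `t ≤ A w` says that `b ≥ B w`.
        have hβw : w ≤ β := by
          have h1 : t ^ 2 ≤ (A * w) ^ 2 := by gcongr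
          have h2 : B ^ 2 * w ^ 2 ≤ B ^ 2 * β ^ 2 := by
            linear_combination h1 - ht2 + w ^ 2 * hC
          have h3 : w ^ 2 ≤ β ^ 2 := le_of_mul_le_mul_left h2 (by positivity)
          exact (pow_le_pow_iff_left₀ hw.le hβ.le two_ne_zero).1 h3
        -- Since `B² β² ≤ C² w²`, the new denominator satisfies `w' ≤ C⁴ w²`.
        have hw'le : w' ≤ C ^ 4 * w ^ 2 := by
          have h1 : 0 ≤ B ^ 2 * t ^ 2 := by positivity
          rw [hw']
          linear_combination h1 + B ^ 2 * ht2 + C ^ 2 * w ^ 2 * hC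
        have e1 : w * (A * w) ≤ β * s := by gcongr
        have e2 : C ^ 4 * B ^ 2 * (w * (A * w)) ≤ C ^ 4 * B ^ 2 * (β * s) := by gcongr
        have e3 : 1 ≤ B ^ 2 * A := by
          have : 0 < B ^ 2 * A := by positivity
          omega
        have e4 : C ^ 4 * w ^ 2 * 1 ≤ C ^ 4 * w ^ 2 * (B ^ 2 * A) := by gcongr
        have e5 : A ^ 3 * C * w * (C ^ 2 * t) ≤ A ^ 3 * C * w * ((N + 1 : ℕ) * w) := by gcongr
        have e6 : A ^ 2 * C * w ^ 2 * (N + 1) * A ≤ A ^ 2 * C * w ^ 2 * (N + 1) * C := by gcongr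
        have e7 : 0 ≤ (N + 1) * (B ^ 4 * β ^ 2) := by positivity
        have e8 : C ^ 2 * t' ≤ (N + 1) * w' - C ^ 4 * w ^ 2 := by
          push_cast at e5
          rw [ht', hw']
          linarith
        linarith
    · have ht'neg : t' < 0 := by
        rcases ht'0.lt_or_eq with h0 | h0
        · exact h0
        · rw [h0] at ht'o; simp at ht'o
      have hid := sub_identity hC h hβ' hs' ht' hw'
      refine ⟨_, _, _, _, h.add h', ?_, ?_, by positivity⟩
      · have hodd : Odd (β * w * t' * s' + β' * w' * t * s) := by
          rcases Int.even_or_odd β with hβe | hβo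
          · exact ((((hβe.mul_right _).mul_right _).mul_right _).add_odd
              ((((hβ'p.2 hβe).mul hw'o).mul hto).mul hso))
          · have hβ'e : Even β' := by
              rw [← Int.not_odd_iff_even, hβ'p, Int.not_even_iff_odd]; exact hβo
            exact (((hβo.mul hwo).mul ht'o).mul hs'o).add_even
              (((hβ'e.mul_right _).mul_right _).mul_right _)
        have h0 : β * w * t' * s' + β' * w' * t * s ≠ 0 := by
          intro h0; rw [h0] at hodd; simp at hodd
        have : A * C * (B * β * w * t' * s' + B * β' * w' * t * s)
            = A * C * B * (β * w * t' * s' + β' * w' * t * s) := by ring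
        rw [this]
        positivity
      · have h1 : 0 < β' * w' * t * s := by positivity
        have h2 : β * w * t' * s' < 0 := by
          have : 0 < β * w * (-t') * s' := by
            have : 0 < -t' := by omega
            positivity
          linarith
        have hABC : 0 < A * C * B := by positivity
        rw [abs_lt]
        constructor <;> nlinarith [mul_pos hABC h1, mul_pos hABC (neg_pos.2 h2)]


/-- Theorem 5: for any admissible pair `(p,q)` with `p⁴−q⁴ < 4p²q²` or
`(p²+q²)(p−q)² > 4p²q²`, there exists an edge cuboid with an internal rectangle whose
edges are in the ratio `(p²−q²) : 2pq`. -/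
theorem exists_edge_cuboid_with_internal_ratio
    (p q : ℤ) (hq : 0 < q) (hqp : q < p) (hcop : IsCoprime p q) (hpar : p % 2 ≠ q % 2)
    (hrange : p ^ 4 - q ^ 4 < 4 * p ^ 2 * q ^ 2 ∨
      (p ^ 2 + q ^ 2) * (p - q) ^ 2 > 4 * p ^ 2 * q ^ 2) :
    ∃ a b E : ℤ, 0 < a ∧ 0 < b ∧ 0 < E ∧
      IsSquare (a ^ 2 + b ^ 2) ∧ IsSquare (a ^ 2 + E) ∧ IsSquare (b ^ 2 + E) ∧
      IsSquare (a ^ 2 + b ^ 2 + E) ∧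
      4 * p ^ 2 * q ^ 2 * a ^ 2 = (p ^ 2 - q ^ 2) ^ 2 * (b ^ 2 + E) := by
  have hC : (p ^ 2 - q ^ 2) ^ 2 + (2 * p * q) ^ 2 = (p ^ 2 + q ^ 2) ^ 2 := by ring
  have hp : 0 < p := by omega
  have hA : 0 < p ^ 2 - q ^ 2 := by nlinarith
  have hB : 0 < 2 * p * q := by positivity
  have hC0 : 0 < p ^ 2 + q ^ 2 := by positivity
  have hpq : Odd p ↔ Even q := by
    rw [Int.odd_iff, Int.even_iff]; omega
  have hAo : Odd (p ^ 2 - q ^ 2) := by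
    simp [Int.odd_sub, parity_simps, hpq]
  have hCo : Odd (p ^ 2 + q ^ 2) := by
    simp [Int.odd_add, parity_simps, hpq]
  have hBe : Even (2 * p * q) := ⟨p * q, by ring⟩
  -- The walk starts at `P = (B : C : A : 1)`.
  obtain ⟨b, s, t, w, ⟨hs, ht⟩, hb0, hb, hw⟩ :=
    exists_small_point_aux hA hB hC0 hC hAo hBe hCo
      ((p ^ 2 + q ^ 2) ^ 2 * (p ^ 2 - q ^ 2)).toNat 1 (p ^ 2 + q ^ 2) (p ^ 2 - q ^ 2) 1
      ⟨by ring, by ring⟩ one_pos hC0 hA one_pos hCo hAo odd_one (by simp)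
      (by rw [Int.toNat_of_nonneg (by positivity)]; simp)
  have hE : b ^ 2 < (2 * p * q * w) ^ 2 := by
    rw [← sq_abs b]
    exact pow_lt_pow_left₀ hb (abs_nonneg b) two_ne_zero
  refine ⟨(p ^ 2 - q ^ 2) * w, |b|, (2 * p * q * w) ^ 2 - b ^ 2, by positivity,
    abs_pos.2 hb0, by linarith, ⟨s, ?_⟩, ⟨t, ?_⟩, ⟨2 * p * q * w, ?_⟩,
    ⟨(p ^ 2 + q ^ 2) * w, ?_⟩, ?_⟩
  · rw [sq_abs]; linear_combination -hs
  · linear_combination -ht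
  · rw [sq_abs]; ring
  · rw [sq_abs]; ring
  · rw [sq_abs]; ring
end

section
/- Let A, B, C be positive integers with gcd(A,B,C) = 1, and let M and N be squarefree positive integers, not both equal to 1. Suppose the seven quantities A, B, C, A+B, A+C, B+C, A+B+C can be split into a set of four, each of which is N times a perfect square, and a set of three, each of which is M times a perfect square. Then N = 1, M > 1, and, up to a permutation of (A,B,C), the set of three is either {A, B, A+B} or {A, B+C, A+B+C}. (In cuboid terms, with A, B, C the squared edges: the three inter-vertex distances of a 3-BPC whose squares share a common squarefree part M > 1 are either the two sides and diagonal of one face, or the two sides and diagonal of one internal rectangle.) -/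
/-!
The seven squared distances are the seven nonzero linear forms in `A, B, C` with coefficients
`0, 1`. Fix `p` not dividing all of `A, B, C`. Then the forms divisible by `p` all lie in one of
seven triples: the six triples of the conclusion and `{A + B, A + C, B + C}`
(`exists_triple_of_not_dvd_all`).

Hence no prime divides `N`, since it would divide four of the forms; so `N = 1` and `M > 1`.
A prime `p` dividing `M` divides the three forms in `S`, so `S` is one of the seven triples.
If `S = {A + B, A + C, B + C}`, then `p` divides `2A`, `2B` and `2C`, so `p = 2` and `A, B, C` are
odd. But then `A, B, C, A + B + C` are all squares with `A + B + C ≡ 3 (mod 4)`, which is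
impossible.
-/

/-- The six admissible triples, together with the triple of the three face diagonals. -/
def triples : List (Finset (Fin 7)) :=
  [{0, 1, 3}, {0, 2, 4}, {1, 2, 5}, {0, 5, 6}, {1, 4, 6}, {2, 3, 6}, {3, 4, 5}]

/-- The triple depends on which of `A, B, C` are divisible by `p`: two of them determine a face,
one of them an internal rectangle. If none is, then `p ∣ A + B + C` excludes the three face
diagonals, and otherwise only these can be divisible by `p`. -/
lemma exists_triple_of_not_dvd_all (A B C p : ℕ) (h : ¬ (p ∣ A ∧ p ∣ B ∧ p ∣ C)) :
    ∃ T ∈ triples, ∀ i, p ∣ ![A, B, C, A + B, A + C, B + C, A + B + C] i → i ∈ T := by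
  have hAB : p ∣ A → (p ∣ A + B ↔ p ∣ B) := fun h => Nat.dvd_add_right h
  have hAC : p ∣ A → (p ∣ A + C ↔ p ∣ C) := fun h => Nat.dvd_add_right h
  have hBC : p ∣ B → (p ∣ B + C ↔ p ∣ C) := fun h => Nat.dvd_add_right h
  have hBA : p ∣ B → (p ∣ A + B ↔ p ∣ A) := fun h => Nat.dvd_add_left h
  have hCA : p ∣ C → (p ∣ A + C ↔ p ∣ A) := fun h => Nat.dvd_add_left h
  have hCB : p ∣ C → (p ∣ B + C ↔ p ∣ B) := fun h => Nat.dvd_add_left h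
  have hC : p ∣ A + B → (p ∣ A + B + C ↔ p ∣ C) := fun h => Nat.dvd_add_right h
  have hC' : p ∣ C → (p ∣ A + B + C ↔ p ∣ A + B) := fun h => Nat.dvd_add_left h
  have hA : p ∣ B + C → (p ∣ A + B + C ↔ p ∣ A) := fun h => by
    rw [add_assoc]; exact Nat.dvd_add_left h
  have hA' : p ∣ A → (p ∣ A + B + C ↔ p ∣ B + C) := fun h => by
    rw [add_assoc]; exact Nat.dvd_add_right h
  have hB : p ∣ A + C → (p ∣ A + B + C ↔ p ∣ B) := fun h => by
    rw [add_right_comm]; exact Nat.dvd_add_right h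
  have hB' : p ∣ B → (p ∣ A + B + C ↔ p ∣ A + C) := fun h => by
    rw [add_right_comm]; exact Nat.dvd_add_left h
  simp only [triples, List.mem_cons, List.not_mem_nil, or_false, exists_eq_or_imp,
    exists_eq_left, Fin.forall_fin_succ, IsEmpty.forall_iff, and_true]
  simp [Fin.ext_iff]
  by_cases a : p ∣ A <;> by_cases b : p ∣ B <;> by_cases c : p ∣ C <;>
    simp only [a, b, c, true_imp_iff, false_imp_iff, iff_true, iff_false, and_self, and_true,
      not_true_eq_false] at h hAB hAC hBC hBA hCA hCB hC hC' hA hA' hB hB' <;>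
    simp [*]
  -- The remaining case: none of `A, B, C` is divisible by `p`.
  by_cases d : p ∣ A + B + C
  · simp_all
  · simp [d]

lemma not_four_odd_squares {A B C : ℕ} (hA : IsSquare A) (hB : IsSquare B) (hC : IsSquare C)
    (hABC : IsSquare (A + B + C)) (oA : A % 2 = 1) (oB : B % 2 = 1) (oC : C % 2 = 1) : False := by
  have key : ∀ n : ℕ, IsSquare n → n % 4 = 0 ∨ n % 4 = 1 := by
    rintro n ⟨r, rfl⟩
    have : r % 4 < 4 := Nat.mod_lt _ (by norm_num)
    rw [Nat.mul_mod]
    interval_cases r % 4 <;> simp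
  have := key A hA
  have := key B hB
  have := key C hC
  have := key _ hABC
  omega

/-- Classification of possible 3-BPCs: if the seven squared inter-vertex distances
`A, B, C, A+B, A+C, B+C, A+B+C` (indexed `0,…,6`) of a cuboid with coprime squared edges
`A, B, C` split into a set `S` of three, each `M` times a square, and its complement of
four, each `N` times a square, with `M, N` squarefree and not both `1`, then `N = 1`,
`M > 1`, and the three are the sides and diagonal of a face or of an internal rectangle. -/
theorem three_BPC_classification (A B C M N : ℕ)
    (hA : 0 < A) (hB : 0 < B) (hC : 0 < C)
    (hgcd : Nat.gcd A (Nat.gcd B C) = 1)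
    (hM : Squarefree M) (hN : Squarefree N) (hMN : ¬ (M = 1 ∧ N = 1))
    (S : Finset (Fin 7)) (hcard : S.card = 3)
    (hMset : ∀ i ∈ S, ∃ m : ℕ, ![A, B, C, A + B, A + C, B + C, A + B + C] i = M * m ^ 2)
    (hNset : ∀ i ∉ S, ∃ n : ℕ, ![A, B, C, A + B, A + C, B + C, A + B + C] i = N * n ^ 2) :
    N = 1 ∧ 1 < M ∧
      (S = ({0, 1, 3} : Finset (Fin 7)) ∨ S = ({0, 2, 4} : Finset (Fin 7)) ∨
       S = ({1, 2, 5} : Finset (Fin 7)) ∨ S = ({0, 5, 6} : Finset (Fin 7)) ∨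
       S = ({1, 4, 6} : Finset (Fin 7)) ∨ S = ({2, 3, 6} : Finset (Fin 7))) := by
  have not_all : ∀ p : ℕ, p.Prime → ¬ (p ∣ A ∧ p ∣ B ∧ p ∣ C) := by
    rintro p hp ⟨h1, h2, h3⟩
    have h := Nat.dvd_gcd h1 (Nat.dvd_gcd h2 h3)
    rw [hgcd] at h
    exact hp.one_lt.ne' (Nat.dvd_one.1 h)
  have card_triple : ∀ T ∈ triples, T.card = 3 := by simp [triples]
  have hN1 : N = 1 := by
    by_contra hne
    obtain ⟨p, hp, hpN⟩ := Nat.exists_prime_and_dvd hne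
    obtain ⟨T, hT, hsub⟩ := exists_triple_of_not_dvd_all A B C p (not_all p hp)
    have hle : Sᶜ ⊆ T := fun i hi => by
      obtain ⟨n, hn⟩ := hNset i (Finset.mem_compl.1 hi)
      exact hsub i (hn ▸ hpN.mul_right _)
    have hc := Finset.card_le_card hle
    rw [card_triple T hT, Finset.card_compl, hcard, Fintype.card_fin] at hc
    omega
  have hM1 : M ≠ 1 := fun h => hMN ⟨h, hN1⟩
  refine ⟨hN1, by have := hM.ne_zero; omega, ?_⟩
  obtain ⟨p, hp, hpM⟩ := Nat.exists_prime_and_dvd hM1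
  have hdvd : ∀ i ∈ S, p ∣ ![A, B, C, A + B, A + C, B + C, A + B + C] i := fun i hi => by
    obtain ⟨m, hm⟩ := hMset i hi
    exact hm ▸ hpM.mul_right _
  obtain ⟨T, hT, hsub⟩ := exists_triple_of_not_dvd_all A B C p (not_all p hp)
  obtain rfl : S = T :=
    Finset.eq_of_subset_of_card_le (fun i hi => hsub i (hdvd i hi)) (by rw [card_triple T hT, hcard])
  simp only [triples, List.mem_cons, List.not_mem_nil, or_false] at hT
  by_cases hS : S = {3, 4, 5}
  · exfalso
    subst hS hN1
    have dAB : p ∣ A + B := hdvd 3 (by decide)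
    have dAC : p ∣ A + C := hdvd 4 (by decide)
    have dBC : p ∣ B + C := hdvd 5 (by decide)
    have sq : ∀ i ∉ ({3, 4, 5} : Finset (Fin 7)),
        IsSquare (![A, B, C, A + B, A + C, B + C, A + B + C] i) := fun i hi => by
      obtain ⟨n, hn⟩ := hNset i hi
      exact ⟨n, by rw [hn]; ring⟩
    -- A common divisor of `X + Y`, `X + Z` and `Y + Z` divides `2 * X`.
    have two_mul_dvd : ∀ X Y Z : ℕ, p ∣ X + Y → p ∣ X + Z → p ∣ Y + Z → p ∣ 2 * X := by
      intro X Y Z hXY hXZ hYZ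
      have h : p ∣ (Y + Z) + 2 * X := by
        have := dvd_add hXY hXZ
        rwa [show X + Y + (X + Z) = Y + Z + 2 * X by ring] at this
      exact (Nat.dvd_add_right hYZ).1 h
    have eA := hp.dvd_mul.1 (two_mul_dvd A B C dAB dAC dBC)
    have eB := hp.dvd_mul.1 (two_mul_dvd B A C (add_comm A B ▸ dAB) dBC dAC)
    have eC := hp.dvd_mul.1 (two_mul_dvd C A B (add_comm A C ▸ dAC) (add_comm B C ▸ dBC) dAB)
    have h2 : p ∣ 2 := by
      by_contra h
      exact not_all p hp ⟨eA.resolve_left h, eB.resolve_left h, eC.resolve_left h⟩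
    obtain rfl : p = 2 := (Nat.prime_dvd_prime_iff_eq hp Nat.prime_two).1 h2
    have hodd := not_all 2 hp
    have sA : IsSquare A := sq 0 (by decide)
    have sB : IsSquare B := sq 1 (by decide)
    have sC : IsSquare C := sq 2 (by decide)
    have sABC : IsSquare (A + B + C) := sq 6 (by decide)
    exact not_four_odd_squares sA sB sC sABC (by omega) (by omega) (by omega)
  · simpa only [hS, or_false] using hT
end

section
/- Let k, l, n be positive integers with n < l such that ln, k²+l², k²+ln, k²+n², and l²−ln are all perfect squares. Then X = ln(k²+ln), Y = l²(ln−n²), and Z = k²(l²−ln) are positive integers such that X, Y, Z, X+Y, X+Z, Y+Z, and X+Y+Z are all perfect squares; that is, the cuboid with edges √X = √(ln(k²+ln)), √Y = l√(ln−n²), √Z = k√(l²−ln) is a perfect cuboid, with face diagonals √(ln(k²+l²)), l√(k²+n²), √((k²+ln)(l²−ln)) and main diagonal l√(k²+ln). -/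
/-- Forward direction of the reduction of the perfect cuboid problem to triples
`(k,l,n)`: if `ln, k²+l², k²+ln, k²+n², l²−ln` are all squares then
`X = ln(k²+ln)`, `Y = l²(ln−n²)`, `Z = k²(l²−ln)` are the squared edges of a perfect
cuboid. -/
theorem perfect_cuboid_of_kln (k l n : ℤ)
    (hk : 0 < k) (hn : 0 < n) (hnl : n < l)
    (h1 : IsSquare (l * n)) (h2 : IsSquare (k ^ 2 + l ^ 2))
    (h3 : IsSquare (k ^ 2 + l * n)) (h4 : IsSquare (k ^ 2 + n ^ 2))
    (h5 : IsSquare (l ^ 2 - l * n)) :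
    0 < l * n * (k ^ 2 + l * n) ∧ 0 < l ^ 2 * (l * n - n ^ 2) ∧
    0 < k ^ 2 * (l ^ 2 - l * n) ∧
    IsSquare (l * n * (k ^ 2 + l * n)) ∧
    IsSquare (l ^ 2 * (l * n - n ^ 2)) ∧
    IsSquare (k ^ 2 * (l ^ 2 - l * n)) ∧
    IsSquare (l * n * (k ^ 2 + l * n) + l ^ 2 * (l * n - n ^ 2)) ∧
    IsSquare (l * n * (k ^ 2 + l * n) + k ^ 2 * (l ^ 2 - l * n)) ∧
    IsSquare (l ^ 2 * (l * n - n ^ 2) + k ^ 2 * (l ^ 2 - l * n)) ∧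
    IsSquare (l * n * (k ^ 2 + l * n) + l ^ 2 * (l * n - n ^ 2) +
      k ^ 2 * (l ^ 2 - l * n)) := by
  have hl : 0 < l := hn.trans hnl
  have hd : 0 < l - n := sub_pos.mpr hnl
  have hk2 : IsSquare (k ^ 2) := IsSquare.sq k
  have hl2 : IsSquare (l ^ 2) := IsSquare.sq l
  -- Each of the seven quantities factors into squares; for `Y` the factorization is
  -- `ln * (l² - ln)`, which makes squareness of `ln - n²` itself unnecessary.
  have eY : l ^ 2 * (l * n - n ^ 2) = l * n * (l ^ 2 - l * n) := by ring
  have eXY : l * n * (k ^ 2 + l * n) + l ^ 2 * (l * n - n ^ 2) =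
      l * n * (k ^ 2 + l ^ 2) := by ring
  have eXZ : l * n * (k ^ 2 + l * n) + k ^ 2 * (l ^ 2 - l * n) =
      l ^ 2 * (k ^ 2 + n ^ 2) := by ring
  have eYZ : l ^ 2 * (l * n - n ^ 2) + k ^ 2 * (l ^ 2 - l * n) =
      (k ^ 2 + l * n) * (l ^ 2 - l * n) := by ring
  have eXYZ : l * n * (k ^ 2 + l * n) + l ^ 2 * (l * n - n ^ 2) +
      k ^ 2 * (l ^ 2 - l * n) = l ^ 2 * (k ^ 2 + l * n) := by ring
  have pos : 0 < l ^ 2 - l * n := by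
    have e : l ^ 2 - l * n = l * (l - n) := by ring
    rw [e]
    positivity
  rw [eXYZ, eXY, eXZ, eYZ, eY]
  exact ⟨by positivity, by positivity, by positivity, h1.mul h3, h1.mul h5, hk2.mul h5,
    h1.mul h2, hl2.mul h4, h3.mul h5, hl2.mul h3⟩
end

section
/- Let (A,B,C) be a perfect cuboid and let D be the positive integer with A²+B²+C² = D². Then k = A·C·D, l = B·D², n = A²·B are positive integers with n < l such that ln, k²+l², k²+ln, k²+n², and l²−ln are all perfect squares. Consequently, if no triple of positive integers (k,l,n) with l > n makes all five of these quantities perfect squares, then no perfect cuboid exists. -/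
/-!
Each of the five quantities factors as a square times face-diagonal squares. With
`D² = A² + B² + C²`,
* `ln = (ABD)²`,
* `k² + l² = D² (A² + B²) (B² + C²)`,
* `k² + ln = A² D² (B² + C²)`,
* `k² + n² = A² (A² + C²) (B² + C²)`,
* `l² - ln = B² D² (B² + C²)`,

and `n < l` amounts to `A² < D²`. The nonexistence claim is the contrapositive.
-/

/-- Converse direction of the reduction of the perfect cuboid problem to triples
`(k,l,n)`: any perfect cuboid `(A,B,C)` with main diagonal `D` yields a triple
`k = ACD`, `l = BD²`, `n = A²B` with `n < l` making `ln, k²+l², k²+ln, k²+n², l²−ln`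
all squares; consequently, if no such triple exists, then no perfect cuboid exists. -/
theorem kln_of_perfect_cuboid :
    (∀ A B C D : ℤ, 0 < A → 0 < B → 0 < C → 0 < D →
      A ^ 2 + B ^ 2 + C ^ 2 = D ^ 2 →
      IsSquare (A ^ 2 + B ^ 2) → IsSquare (A ^ 2 + C ^ 2) → IsSquare (B ^ 2 + C ^ 2) →
      0 < A * C * D ∧ 0 < B * D ^ 2 ∧ 0 < A ^ 2 * B ∧ A ^ 2 * B < B * D ^ 2 ∧
      IsSquare ((B * D ^ 2) * (A ^ 2 * B)) ∧
      IsSquare ((A * C * D) ^ 2 + (B * D ^ 2) ^ 2) ∧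
      IsSquare ((A * C * D) ^ 2 + (B * D ^ 2) * (A ^ 2 * B)) ∧
      IsSquare ((A * C * D) ^ 2 + (A ^ 2 * B) ^ 2) ∧
      IsSquare ((B * D ^ 2) ^ 2 - (B * D ^ 2) * (A ^ 2 * B))) ∧
    ((¬ ∃ k l n : ℤ, 0 < k ∧ 0 < n ∧ n < l ∧
        IsSquare (l * n) ∧ IsSquare (k ^ 2 + l ^ 2) ∧ IsSquare (k ^ 2 + l * n) ∧
        IsSquare (k ^ 2 + n ^ 2) ∧ IsSquare (l ^ 2 - l * n)) →
      ¬ ∃ a b c : ℤ, 0 < a ∧ 0 < b ∧ 0 < c ∧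
        IsSquare (a ^ 2 + b ^ 2) ∧ IsSquare (a ^ 2 + c ^ 2) ∧ IsSquare (b ^ 2 + c ^ 2) ∧
        IsSquare (a ^ 2 + b ^ 2 + c ^ 2)) := by
  have key : ∀ A B C D : ℤ, 0 < A → 0 < B → 0 < C → 0 < D →
      A ^ 2 + B ^ 2 + C ^ 2 = D ^ 2 →
      IsSquare (A ^ 2 + B ^ 2) → IsSquare (A ^ 2 + C ^ 2) → IsSquare (B ^ 2 + C ^ 2) →
      0 < A * C * D ∧ 0 < B * D ^ 2 ∧ 0 < A ^ 2 * B ∧ A ^ 2 * B < B * D ^ 2 ∧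
      IsSquare ((B * D ^ 2) * (A ^ 2 * B)) ∧
      IsSquare ((A * C * D) ^ 2 + (B * D ^ 2) ^ 2) ∧
      IsSquare ((A * C * D) ^ 2 + (B * D ^ 2) * (A ^ 2 * B)) ∧
      IsSquare ((A * C * D) ^ 2 + (A ^ 2 * B) ^ 2) ∧
      IsSquare ((B * D ^ 2) ^ 2 - (B * D ^ 2) * (A ^ 2 * B)) := by
    rintro A B C D hA hB hC hD h ⟨p, hp⟩ ⟨q, hq⟩ ⟨r, hr⟩
    refine ⟨by positivity, by positivity, by positivity, ?_, ⟨A * B * D, by ring⟩,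
      ⟨D * p * r, ?_⟩, ⟨A * D * r, ?_⟩, ⟨A * q * r, ?_⟩, ⟨B * D * r, ?_⟩⟩
    · have hAD : A ^ 2 < D ^ 2 := by
        have : 0 < B ^ 2 := by positivity
        have : 0 < C ^ 2 := by positivity
        linarith
      rw [mul_comm (A ^ 2) B]
      exact mul_lt_mul_of_pos_left hAD hB
    · linear_combination
        D ^ 2 * (-B ^ 2 * h + (B ^ 2 + C ^ 2) * hp + p * p * hr)
    · linear_combination A ^ 2 * D ^ 2 * hr
    · linear_combination
        A ^ 2 * (-C ^ 2 * h + (B ^ 2 + C ^ 2) * hq + q * q * hr)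
    · linear_combination B ^ 2 * D ^ 2 * (hr - h)
  refine ⟨key, ?_⟩
  rintro hno ⟨a, b, c, ha, hb, hc, hab, hac, hbc, d, hd⟩
  -- The root `d` may be negative, so `|d|` serves as the space diagonal.
  have hd0 : 0 < |d| := by
    rw [abs_pos]
    rintro rfl
    have : 0 < a ^ 2 + b ^ 2 + c ^ 2 := by positivity
    linarith
  have hD : a ^ 2 + b ^ 2 + c ^ 2 = |d| ^ 2 := by rw [sq_abs, hd, sq]
  obtain ⟨hk, -, hn, hnl, hsq⟩ := key a b c |d| ha hb hc hd0 hD hab hac hbc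
  exact hno ⟨_, _, _, hk, hn, hnl, hsq⟩
end
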